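/- arXiv:math/0606306 — 6 statements merged into one kernel-verified Lean document; each statement's English description precedes it below -/
import Mathlib

section
/- Let D ⊆ ℂ be a bounded domain whose boundary ∂D has exactly n ≥ 2 connected components Γ_1, …, Γ_n, each containing more than one point. For 1 ≤ j ≤ n−1 let ω_j : cl(D) → ℝ be continuous on cl(D), harmonic on D, with ω_j ≡ 1 on Γ_j and ω_j ≡ 0 on Γ_k for every k ≠ j. Then for every real-valued harmonic function h on D there exists a unique tuple (c_1, …, c_{n−1}) ∈ ℝ^{n−1} such that the function h + Σ_{j=1}^{n−1} c_j ω_j is the real part of a (single-valued) holomorphic function on D. -/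
open Complex Set

/-- A real-valued function is harmonic on a set `s` (intended: `s` open) if it is C²
there and its Laplacian vanishes at every point of `s`. -/
def HarmonicOnR (u : ℂ → ℝ) (s : Set ℂ) : Prop :=
  ContDiffOn ℝ 2 u s ∧
    ∀ z ∈ s,
      iteratedFDeriv ℝ 2 u z ![1, 1] + iteratedFDeriv ℝ 2 u z ![Complex.I, Complex.I] = 0

/-! ### Analytic preliminaries -/

/-- Holomorphic dependence on a parameter of an integral over `[0,1]`. -/
lemma hcc_param_diff {U : Set ℂ} (hU : IsOpen U) (k : ℂ → ℝ → ℂ)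
    (hc : ContinuousOn (Function.uncurry k) (U ×ˢ Icc (0 : ℝ) 1))
    (hd : ∀ t ∈ Icc (0 : ℝ) 1, DifferentiableOn ℂ (fun z => k z t) U) :
    DifferentiableOn ℂ (fun z => ∫ t in (0 : ℝ)..1, k z t) U := by
  intro z₀ hz₀
  apply DifferentiableAt.differentiableWithinAt
  obtain ⟨r, hr, hrU⟩ := Metric.nhds_basis_closedBall.mem_iff.1 (hU.mem_nhds hz₀)
  have hK : IsCompact (Metric.closedBall z₀ r ×ˢ Icc (0 : ℝ) 1) :=
    (isCompact_closedBall z₀ r).prod isCompact_Icc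
  obtain ⟨M, hM⟩ := hK.exists_bound_of_continuousOn
    (hc.mono (prod_mono hrU (Subset.refl _)))
  have hkc : ∀ z ∈ U, ContinuousOn (k z) (Icc 0 1) := by
    intro z hz
    have : ContinuousOn (fun t : ℝ => (z, t)) (Icc (0 : ℝ) 1) := by fun_prop
    exact hc.comp this (fun t ht => ⟨hz, ht⟩)
  have hIoc : Set.uIoc (0 : ℝ) 1 = Ioc 0 1 := Set.uIoc_of_le zero_le_one
  have hmeas : ∀ z ∈ U, MeasureTheory.AEStronglyMeasurable (k z)
      (MeasureTheory.volume.restrict (Set.uIoc (0 : ℝ) 1)) := by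
    intro z hz
    rw [hIoc]
    exact ((hkc z hz).mono Ioc_subset_Icc_self).aestronglyMeasurable measurableSet_Ioc
  have hda : ∀ t ∈ Icc (0 : ℝ) 1, ∀ z ∈ U, HasDerivAt (fun z => k z t)
      (deriv (fun z => k z t) z) z := fun t ht z hz =>
    ((hd t ht).differentiableAt (hU.mem_nhds hz)).hasDerivAt
  have key := intervalIntegral.hasDerivAt_integral_of_dominated_loc_of_deriv_le
    (μ := MeasureTheory.volume) (a := (0 : ℝ)) (b := 1)
    (F := k) (F' := fun z t => deriv (fun z => k z t) z) (x₀ := z₀)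
    (s := Metric.ball z₀ (r / 2)) (bound := fun _ => M / (r / 2))
    (Metric.ball_mem_nhds _ (by positivity)) ?_ ?_ ?_ ?_ ?_ ?_
  · exact key.2.differentiableAt
  · filter_upwards [hU.mem_nhds hz₀] with z hz using hmeas z hz
  · apply ContinuousOn.intervalIntegrable
    rw [uIcc_of_le zero_le_one]
    exact hkc z₀ hz₀
  · -- measurability of the derivative
    have hu : Filter.Tendsto (fun m : ℕ => z₀ + (((r : ℝ) / ((m : ℝ) + 1) : ℝ) : ℂ)) Filter.atTop
        (nhdsWithin z₀ {z₀}ᶜ) := by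
      apply tendsto_nhdsWithin_iff.2 ⟨?_, ?_⟩
      · have h1 : Filter.Tendsto (fun m : ℕ => (r : ℝ) / ((m : ℝ) + 1)) Filter.atTop (nhds 0) :=
          by simpa [div_eq_mul_inv] using
            (tendsto_one_div_add_atTop_nhds_zero_nat (𝕜 := ℝ)).const_mul r
        have h2 := (Complex.continuous_ofReal.tendsto 0).comp h1
        simpa using h2.const_add z₀
      · refine Filter.Eventually.of_forall fun m => ?_
        have : (r : ℝ) / ((m : ℝ) + 1) ≠ 0 := by positivity
        simp only [mem_compl_iff, mem_singleton_iff, add_eq_left]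
        exact_mod_cast this
    refine aestronglyMeasurable_of_tendsto_ae (u := Filter.atTop)
      (f := fun (m : ℕ) t => slope (fun z => k z t) z₀ (z₀ + (((r : ℝ) / ((m : ℝ) + 1) : ℝ) : ℂ)))
      ?_ ?_
    · intro m
      have hmem : z₀ + (((r : ℝ) / ((m : ℝ) + 1) : ℝ) : ℂ) ∈ U := by
        apply hrU
        rw [Metric.mem_closedBall, dist_eq_norm, add_sub_cancel_left, Complex.norm_real,
          Real.norm_of_nonneg (by positivity)]
        exact div_le_self hr.le (by simp)
      simp only [slope, vsub_eq_sub]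
      exact ((hmeas _ hmem).sub (hmeas _ hz₀)).const_smul
        (z₀ + (((r : ℝ) / ((m : ℝ) + 1) : ℝ) : ℂ) - z₀)⁻¹
    · rw [MeasureTheory.ae_restrict_iff' measurableSet_uIoc]
      refine Filter.Eventually.of_forall fun t ht => ?_
      rw [hIoc] at ht
      exact (hasDerivAt_iff_tendsto_slope.1 (hda t (Ioc_subset_Icc_self ht) z₀ hz₀)).comp hu
  · refine Filter.Eventually.of_forall fun t ht z hz => ?_
    rw [hIoc] at ht
    have hsub : Metric.closedBall z (r / 2) ⊆ Metric.closedBall z₀ r := by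
      apply Metric.closedBall_subset_closedBall'
      have := (Metric.mem_ball.1 hz).le
      linarith
    apply Complex.norm_deriv_le_of_forall_mem_sphere_norm_le (by positivity)
    · apply DifferentiableOn.diffContOnCl
      rw [closure_ball _ (by positivity)]
      exact (hd t (Ioc_subset_Icc_self ht)).mono (hsub.trans hrU)
    · intro w hw
      exact hM (w, t) ⟨hsub (Metric.sphere_subset_closedBall hw), Ioc_subset_Icc_self ht⟩
  · exact intervalIntegrable_const
  · refine Filter.Eventually.of_forall fun t ht z hz => ?_
    rw [hIoc] at ht
    exact hda t (Ioc_subset_Icc_self ht) z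
      (hrU ((Metric.ball_subset_closedBall.trans
        (Metric.closedBall_subset_closedBall (by linarith))) hz))

lemma hcc_dslope_symm (g : ℂ → ℂ) (z w : ℂ) : dslope g z w = dslope g w z := by
  by_cases h : z = w
  · rw [h]
  · rw [dslope_of_ne _ (Ne.symm h), dslope_of_ne _ h, slope_comm]

/-- Joint continuity of the difference quotient of a holomorphic function. -/
lemma hcc_dslope_cont {D : Set ℂ} (hD : IsOpen D) {g : ℂ → ℂ} (hg : DifferentiableOn ℂ g D) :
    ContinuousOn (Function.uncurry (dslope g)) (D ×ˢ D) := by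
  rintro ⟨z, w⟩ ⟨hz, hw⟩
  apply ContinuousAt.continuousWithinAt
  simp only at hz hw
  have hgz : ContinuousAt g z := (hg.differentiableAt (hD.mem_nhds hz)).continuousAt
  have hgw : ContinuousAt g w := (hg.differentiableAt (hD.mem_nhds hw)).continuousAt
  by_cases h : z = w
  · subst h
    have hs : HasStrictDerivAt g (deriv g z) z :=
      (hg.analyticAt (hD.mem_nhds hz)).hasStrictDerivAt
    have hdc : ContinuousAt (deriv g) z :=
      ((hg.analyticAt (hD.mem_nhds hz)).deriv).continuousAt
    rw [Metric.continuousAt_iff']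
    intro ε hε
    have h1 := hs.hasStrictFDerivAt.isLittleO.def (half_pos hε)
    have h2 : ∀ᶠ p : ℂ × ℂ in nhds (z, z), dist (deriv g p.1) (deriv g z) < ε :=
      (continuousAt_fst (p := ((z, z) : ℂ × ℂ))).eventually
        ((Metric.continuousAt_iff'.1 hdc) ε hε)
    filter_upwards [h1, h2] with p hp1 hp2
    obtain ⟨a, b⟩ := p
    simp only [Function.uncurry_apply_pair, dslope_same] at *
    by_cases hab : b = a
    · subst hab
      simpa using hp2
    · have hab' : a - b ≠ 0 := sub_ne_zero.2 (Ne.symm hab)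
      rw [hcc_dslope_symm, dslope_of_ne _ (Ne.symm hab), dist_eq_norm, slope_def_field]
      have : (g a - g b) / (a - b) - deriv g z = (g a - g b - (a - b) • deriv g z) / (a - b) := by
        simp only [smul_eq_mul]
        field_simp
      rw [this, norm_div, div_lt_iff₀ (norm_pos_iff.2 hab')]
      have : 0 < ‖a - b‖ := norm_pos_iff.2 hab'
      calc _ ≤ ε / 2 * ‖a - b‖ := hp1
        _ < ε * ‖a - b‖ := by nlinarith
  · have hev : Function.uncurry (dslope g) =ᶠ[nhds (z, w)]
        fun p => (g p.2 - g p.1) / (p.2 - p.1) := by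
      have : ∀ᶠ p : ℂ × ℂ in nhds (z, w), p.1 ≠ p.2 :=
        (isOpen_ne_fun continuous_fst continuous_snd).mem_nhds h
      filter_upwards [this] with p hp
      rw [Function.uncurry_def]
      simp only
      rw [dslope_of_ne _ (Ne.symm hp), slope_def_field]
    refine ContinuousAt.congr ?_ hev.symm
    have h1 : ContinuousAt (fun p : ℂ × ℂ => g p.1) (z, w) :=
      ContinuousAt.comp (f := Prod.fst) (g := g) hgz continuousAt_fst
    have h2 : ContinuousAt (fun p : ℂ × ℂ => g p.2) (z, w) :=
      ContinuousAt.comp (f := Prod.snd) (g := g) hgw continuousAt_snd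
    exact (h2.sub h1).div (by fun_prop) (sub_ne_zero.2 (Ne.symm h))

/-! ### Chains of segments -/

/-- Parametrized segment. -/
noncomputable def hccSeg (p : ℂ × ℂ) (t : ℝ) : ℂ := p.1 + t * (p.2 - p.1)

/-- Integral along a segment. -/
noncomputable def hccInt (g : ℂ → ℂ) (p : ℂ × ℂ) : ℂ :=
  ∫ t in (0 : ℝ)..1, g (hccSeg p t) * (p.2 - p.1)

/-- Segments contained in `D`. -/
abbrev HccS (D : Set ℂ) : Type := {p : ℂ × ℂ // ∀ t ∈ Icc (0 : ℝ) 1, hccSeg p t ∈ D}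

/-- Boundary of a chain. -/
noncomputable def hccBd (D : Set ℂ) : (HccS D →₀ ℂ) →ₗ[ℂ] (ℂ →₀ ℂ) :=
  Finsupp.linearCombination ℂ (fun p : HccS D =>
    Finsupp.single p.1.2 (1 : ℂ) - Finsupp.single p.1.1 (1 : ℂ))

/-- Integral along a chain. -/
noncomputable def hccI (D : Set ℂ) (g : ℂ → ℂ) : (HccS D →₀ ℂ) →ₗ[ℂ] ℂ :=
  Finsupp.linearCombination ℂ (fun p : HccS D => hccInt g p.1)

lemma hccSeg_cont (p : ℂ × ℂ) : Continuous (hccSeg p) := by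
  unfold hccSeg; fun_prop

lemma hccSeg_zero (p : ℂ × ℂ) : hccSeg p 0 = p.1 := by simp [hccSeg]
lemma hccSeg_one (p : ℂ × ℂ) : hccSeg p 1 = p.2 := by simp [hccSeg]

lemma hccInt_ftc {g G : ℂ → ℂ} {p : ℂ × ℂ}
    (hG : ∀ t ∈ Icc (0 : ℝ) 1, HasDerivAt G (g (hccSeg p t)) (hccSeg p t))
    (hg : ContinuousOn (fun t => g (hccSeg p t)) (Icc 0 1)) :
    hccInt g p = G p.2 - G p.1 := by
  have hs : ∀ t : ℝ, HasDerivAt (hccSeg p) (p.2 - p.1) t := by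
    intro t
    have := ((Complex.ofRealCLM.hasDerivAt (x := t)).mul_const (p.2 - p.1)).const_add p.1
    rw [Complex.ofRealCLM_apply, Complex.ofReal_one, one_mul] at this
    exact this
  have := intervalIntegral.integral_eq_sub_of_hasDerivAt (a := (0 : ℝ)) (b := 1)
    (f := G ∘ hccSeg p) (f' := fun t => g (hccSeg p t) * (p.2 - p.1)) ?_ ?_
  · rw [hccInt, this]
    simp [hccSeg_zero, hccSeg_one]
  · intro t ht
    rw [uIcc_of_le zero_le_one] at ht
    exact (hG t ht).comp t (hs t)
  · apply ContinuousOn.intervalIntegrable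
    rw [uIcc_of_le zero_le_one]
    exact hg.mul continuousOn_const

lemma hccI_apply (D : Set ℂ) (g : ℂ → ℂ) (c : HccS D →₀ ℂ) :
    hccI D g c = ∑ p ∈ c.support, c p * hccInt g p.1 := by
  simp [hccI, Finsupp.linearCombination_apply, Finsupp.sum]

lemma hccI_eq_of_diff {D : Set ℂ} {g : ℂ → ℂ} {G : ℂ → ℂ} (c : HccS D →₀ ℂ)
    (h : ∀ p ∈ c.support, hccInt g p.1 = G p.1.2 - G p.1.1) :
    hccI D g c = Finsupp.linearCombination ℂ G (hccBd D c) := by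
  rw [hccI_apply, hccBd, Finsupp.linearCombination_apply ℂ c, Finsupp.sum, map_sum]
  refine Finset.sum_congr rfl fun p hp => ?_
  rw [h p hp]
  simp

lemma hccI_zero_of_diff {D : Set ℂ} {g : ℂ → ℂ} {G : ℂ → ℂ} {c : HccS D →₀ ℂ}
    (hc : hccBd D c = 0)
    (h : ∀ p ∈ c.support, hccInt g p.1 = G p.1.2 - G p.1.1) : hccI D g c = 0 := by
  rw [hccI_eq_of_diff c h, hc, map_zero]

lemma hccInt_cont {D : Set ℂ} {g : ℂ → ℂ} (hg : ContinuousOn g D) (p : HccS D) :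
    ContinuousOn (fun t => g (hccSeg p.1 t)) (Icc 0 1) :=
  hg.comp (hccSeg_cont _).continuousOn p.2

lemma hccInt_sub {f g : ℂ → ℂ} {p : ℂ × ℂ}
    (hf : ContinuousOn (fun t => f (hccSeg p t)) (Icc 0 1))
    (hg : ContinuousOn (fun t => g (hccSeg p t)) (Icc 0 1)) (a : ℂ) :
    hccInt (fun z => f z - a * g z) p = hccInt f p - a * hccInt g p := by
  unfold hccInt
  rw [← intervalIntegral.integral_const_mul, ← intervalIntegral.integral_sub]
  · congr 1; ext t; ring
  · apply ContinuousOn.intervalIntegrable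
    rw [uIcc_of_le zero_le_one]
    exact hf.mul continuousOn_const
  · apply ContinuousOn.intervalIntegrable
    rw [uIcc_of_le zero_le_one]
    exact continuousOn_const.mul (hg.mul continuousOn_const)

lemma hccInt_congr {f g : ℂ → ℂ} {p : ℂ × ℂ}
    (h : ∀ t ∈ Icc (0 : ℝ) 1, f (hccSeg p t) = g (hccSeg p t)) : hccInt f p = hccInt g p := by
  unfold hccInt
  apply intervalIntegral.integral_congr
  intro t ht
  rw [uIcc_of_le zero_le_one] at ht
  simp only [h t ht]

/-- The compact track of a chain. -/
def hccTr {D : Set ℂ} (c : HccS D →₀ ℂ) : Set ℂ :=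
  ⋃ p ∈ c.support, hccSeg p.1 '' Icc 0 1

lemma hccTr_compact {D : Set ℂ} (c : HccS D →₀ ℂ) : IsCompact (hccTr c) :=
  c.support.isCompact_biUnion fun _ _ => isCompact_Icc.image (hccSeg_cont _)

lemma hccTr_mem {D : Set ℂ} {c : HccS D →₀ ℂ} {p : HccS D} (hp : p ∈ c.support) {t : ℝ}
    (ht : t ∈ Icc (0 : ℝ) 1) : hccSeg p.1 t ∈ hccTr c :=
  mem_biUnion hp ⟨t, ht, rfl⟩

lemma hccTr_sub {D : Set ℂ} (c : HccS D →₀ ℂ) : hccTr c ⊆ D := by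
  intro z hz
  simp only [hccTr, mem_iUnion] at hz
  obtain ⟨p, _, t, ht, rfl⟩ := hz
  exact p.2 t ht


lemma hccI_sub {D : Set ℂ} {f g : ℂ → ℂ} {c : HccS D →₀ ℂ}
    (hf : ContinuousOn f (hccTr c)) (hg : ContinuousOn g (hccTr c)) (a : ℂ) :
    hccI D (fun z => f z - a * g z) c = hccI D f c - a * hccI D g c := by
  rw [hccI_apply, hccI_apply, hccI_apply, Finset.mul_sum, ← Finset.sum_sub_distrib]
  refine Finset.sum_congr rfl fun p hp => ?_
  rw [hccInt_sub (hf.comp (hccSeg_cont _).continuousOn fun t ht => hccTr_mem hp ht)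
    (hg.comp (hccSeg_cont _).continuousOn fun t ht => hccTr_mem hp ht)]
  ring

lemma hccI_congr {D : Set ℂ} {f g : ℂ → ℂ} {c : HccS D →₀ ℂ}
    (h : EqOn f g (hccTr c)) : hccI D f c = hccI D g c := by
  rw [hccI_apply, hccI_apply]
  refine Finset.sum_congr rfl fun p hp => ?_
  rw [hccInt_congr fun t ht => h (hccTr_mem hp ht)]

/-- Cauchy's theorem for functions with a primitive along a cycle. -/
lemma hccI_zero_of_prim {D : Set ℂ} {g G : ℂ → ℂ} {c : HccS D →₀ ℂ}
    (hc : hccBd D c = 0) (hg : ContinuousOn g (hccTr c))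
    (hG : ∀ z ∈ hccTr c, HasDerivAt G (g z) z) : hccI D g c = 0 :=
  hccI_zero_of_diff (G := G) hc fun _ hp =>
    hccInt_ftc (fun _ ht => hG _ (hccTr_mem hp ht))
      (hg.comp (hccSeg_cont _).continuousOn fun _ ht => hccTr_mem hp ht)

/-- (`2πi` times) the winding number of a chain. -/
noncomputable def hccN (D : Set ℂ) (c : HccS D →₀ ℂ) (w : ℂ) : ℂ :=
  hccI D (fun z => (z - w)⁻¹) c

lemma hcc_inv_cont {K : Set ℂ} {w : ℂ} (hw : w ∉ K) :
    ContinuousOn (fun z => (z - w)⁻¹) K :=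
  (continuousOn_id.sub continuousOn_const).inv₀ fun z hz => by
    refine sub_ne_zero.2 ?_; rintro rfl; exact hw hz

lemma hccN_locConst {D : Set ℂ} {c : HccS D →₀ ℂ} (hc : hccBd D c = 0) {w₀ : ℂ}
    (hw₀ : w₀ ∉ hccTr c) : ∀ᶠ w in nhds w₀, w ∉ hccTr c ∧ hccN D c w = hccN D c w₀ := by
  have hop : IsOpen (hccTr c)ᶜ := (hccTr_compact c).isClosed.isOpen_compl
  obtain ⟨r, hr, hball⟩ := Metric.isOpen_iff.1 hop w₀ hw₀
  filter_upwards [Metric.ball_mem_nhds w₀ hr] with w hw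
  have hwt : w ∉ hccTr c := hball hw
  refine ⟨hwt, ?_⟩
  have h0 : hccI D (fun z => (z - w)⁻¹ - 1 * (z - w₀)⁻¹) c = 0 := by
    refine hccI_zero_of_prim (G := fun z => Complex.log ((z - w) / (z - w₀))) hc
      ((hcc_inv_cont hwt).sub (continuousOn_const.mul (hcc_inv_cont hw₀))) ?_
    intro z hz
    have hzw : z - w ≠ 0 := by rw [sub_ne_zero]; rintro rfl; exact hwt hz
    have hzw₀ : z - w₀ ≠ 0 := by rw [sub_ne_zero]; rintro rfl; exact hw₀ hz
    have hd : HasDerivAt (fun z => (z - w) / (z - w₀))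
        ((1 * (z - w₀) - (z - w) * 1) / (z - w₀) ^ 2) z :=
      ((hasDerivAt_id z).sub_const w).div ((hasDerivAt_id z).sub_const w₀) hzw₀
    have hslit : (z - w) / (z - w₀) ∈ Complex.slitPlane := by
      have hlt : ‖(w₀ - w) / (z - w₀)‖ < 1 := by
        rw [norm_div, div_lt_one (norm_pos_iff.2 hzw₀)]
        have h1 : r ≤ ‖z - w₀‖ := by
          by_contra hlt
          exact hball (by rw [Metric.mem_ball, dist_eq_norm]; exact not_le.1 hlt) hz
        have h2 : ‖w₀ - w‖ < r := by
          rw [norm_sub_rev, ← dist_eq_norm]; exact hw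
        linarith
      have : (z - w) / (z - w₀) = 1 + (w₀ - w) / (z - w₀) := by
        field_simp; ring
      rw [this]
      exact Complex.mem_slitPlane_of_norm_lt_one hlt
    convert hd.clog hslit using 1
    field_simp
  rw [hccI_sub (hcc_inv_cont hwt) (hcc_inv_cont hw₀)] at h0
  unfold hccN
  linear_combination h0

lemma hcc_dixon_aux {D : Set ℂ} (hD : IsOpen D) (hb : Bornology.IsBounded D) {g : ℂ → ℂ}
    (hg : DifferentiableOn ℂ g D) {c : HccS D →₀ ℂ} (hc : hccBd D c = 0)
    (hN : ∀ w ∉ D, hccN D c w = 0) : ∀ z ∈ D, hccI D (dslope g z) c = 0 := by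
  classical
  set f : ℂ → ℂ := fun z => if z ∈ D then hccI D (dslope g z) c else
    hccI D (fun w => g w * (w - z)⁻¹) c with hf
  have hgT : ContinuousOn g (hccTr c) := hg.continuousOn.mono (hccTr_sub c)
  have h1 : DifferentiableOn ℂ (fun z => hccI D (dslope g z) c) D := by
    simp only [hccI_apply]
    refine DifferentiableOn.fun_sum fun p hp => ?_
    refine DifferentiableOn.const_mul ?_ _
    unfold hccInt
    refine hcc_param_diff hD (fun z t => dslope g z (hccSeg p.1 t) * (p.1.2 - p.1.1)) ?_ ?_
    · refine ContinuousOn.mul ?_ continuousOn_const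
      refine (hcc_dslope_cont hD hg).comp
        (f := fun q : ℂ × ℝ => (q.1, hccSeg p.1 q.2)) ?_ ?_
      · have := hccSeg_cont p.1
        fun_prop
      · rintro ⟨z, t⟩ ⟨hz, ht⟩
        exact ⟨hz, p.2 t ht⟩
    · intro t ht
      refine DifferentiableOn.mul_const ?_ _
      simp only [fun z => hcc_dslope_symm g z (hccSeg p.1 t)]
      exact (Complex.differentiableOn_dslope (hD.mem_nhds (p.2 t ht))).2 hg
  have h2 : DifferentiableOn ℂ (fun z => hccI D (fun w => g w * (w - z)⁻¹) c) (hccTr c)ᶜ := by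
    simp only [hccI_apply]
    refine DifferentiableOn.fun_sum fun p hp => ?_
    refine DifferentiableOn.const_mul ?_ _
    unfold hccInt
    have hne : ∀ z ∈ (hccTr c)ᶜ, ∀ t ∈ Icc (0 : ℝ) 1, hccSeg p.1 t - z ≠ 0 := by
      intro z hz t ht h0
      rw [sub_eq_zero] at h0
      exact hz (h0 ▸ hccTr_mem hp ht)
    refine hcc_param_diff (hccTr_compact c).isClosed.isOpen_compl
      (fun z t => g (hccSeg p.1 t) * (hccSeg p.1 t - z)⁻¹ * (p.1.2 - p.1.1)) ?_ ?_
    · refine ContinuousOn.mul ?_ continuousOn_const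
      refine ContinuousOn.mul ?_ ?_
      · exact (hccInt_cont hg.continuousOn p).comp (f := fun q : ℂ × ℝ => q.2)
          continuousOn_snd fun q hq => hq.2
      · refine ContinuousOn.inv₀ ?_ ?_
        · have := hccSeg_cont p.1
          fun_prop
        · rintro ⟨z, t⟩ ⟨hz, ht⟩
          exact hne z hz t ht
    · intro t ht z hz
      apply DifferentiableAt.differentiableWithinAt
      have := hne z hz t ht
      fun_prop (disch := assumption)
  have hentire : Differentiable ℂ f := by
    intro z
    by_cases hz : z ∈ D
    · have : f =ᶠ[nhds z] fun z => hccI D (dslope g z) c := by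
        filter_upwards [hD.mem_nhds hz] with w hw
        simp [hf, hw]
      exact (h1.differentiableAt (hD.mem_nhds hz)).congr_of_eventuallyEq this
    · have hzt : z ∉ hccTr c := fun h => hz (hccTr_sub c h)
      have : f =ᶠ[nhds z] fun z => hccI D (fun w => g w * (w - z)⁻¹) c := by
        filter_upwards [hccN_locConst hc hzt] with w hw
        by_cases hwD : w ∈ D
        · simp only [hf, hwD, if_true]
          have he : EqOn (dslope g w) (fun ζ => g ζ * (ζ - w)⁻¹ - g w * (ζ - w)⁻¹) (hccTr c) := by
            intro ζ hζ
            have : ζ ≠ w := by rintro rfl; exact hw.1 hζ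
            rw [dslope_of_ne _ this, slope_def_field]
            ring
          rw [hccI_congr he, hccI_sub (f := fun ζ => g ζ * (ζ - w)⁻¹) (hgT.mul (hcc_inv_cont hw.1)) (hcc_inv_cont hw.1)]
          have h0 : hccI D (fun ζ => (ζ - w)⁻¹) c = 0 := by
            have := hw.2
            rw [hN z hz] at this
            exact this
          rw [h0]; ring
        · simp [hf, hwD]
      exact (h2.differentiableAt
        ((hccTr_compact c).isClosed.isOpen_compl.mem_nhds hzt)).congr_of_eventuallyEq this
  obtain ⟨R, hR⟩ := hb.subset_closedBall 0
  have hnorm : Filter.Tendsto (fun z : ℂ => ‖z‖) (Filter.cocompact ℂ) Filter.atTop :=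
    tendsto_norm_cocompact_atTop
  have hlim : Filter.Tendsto f (Filter.cocompact ℂ) (nhds 0) := by
    have hev : (fun z => ∑ p ∈ c.support, c p * hccInt (fun w => g w * (w - z)⁻¹) p.1)
        =ᶠ[Filter.cocompact ℂ] f := by
      filter_upwards [hnorm.eventually_gt_atTop R] with z hz
      have : z ∉ D := fun h => by
        have := hR h
        rw [mem_closedBall_zero_iff] at this
        linarith
      simp only [hf, this, if_false]
      rw [hccI_apply]
    refine Filter.Tendsto.congr' hev ?_
    have hz0 : (0 : ℂ) = ∑ p ∈ c.support, c p * 0 := by simp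
    refine Filter.Tendsto.mono_right ?_ (le_of_eq (congrArg nhds hz0.symm))
    refine tendsto_finsetSum _ fun p hp => ?_
    refine Filter.Tendsto.const_mul _ ?_
    obtain ⟨M, hM⟩ := isCompact_Icc.exists_bound_of_continuousOn
      (hccInt_cont hg.continuousOn p)
    have hM0 : 0 ≤ M := (norm_nonneg _).trans (hM 0 ⟨le_rfl, zero_le_one⟩)
    have hlim2 : Filter.Tendsto (fun z : ℂ => M * ‖p.1.2 - p.1.1‖ * (‖z‖ - R)⁻¹)
        (Filter.cocompact ℂ) (nhds 0) := by
      have := (tendsto_inv_atTop_zero.comp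
        (Filter.tendsto_atTop_add_const_right _ (-R) hnorm)).const_mul (M * ‖p.1.2 - p.1.1‖)
      simpa only [mul_zero, sub_eq_add_neg, Function.comp_def] using this
    refine squeeze_zero_norm' ?_ hlim2
    filter_upwards [hnorm.eventually_gt_atTop R] with z hz
    have := intervalIntegral.norm_integral_le_of_norm_le_const (a := (0 : ℝ)) (b := 1)
      (f := fun t => g (hccSeg p.1 t) * (hccSeg p.1 t - z)⁻¹ * (p.1.2 - p.1.1))
      (C := M * ‖p.1.2 - p.1.1‖ * (‖z‖ - R)⁻¹) ?_
    · simpa [hccInt] using this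
    · intro t ht
      rw [uIoc_of_le zero_le_one] at ht
      have ht' := Ioc_subset_Icc_self ht
      rw [norm_mul, norm_mul, norm_inv]
      have hd : ‖z‖ - R ≤ ‖hccSeg p.1 t - z‖ := by
        have h1 := hR (p.2 t ht')
        rw [mem_closedBall_zero_iff] at h1
        have h2 := norm_sub_norm_le z (hccSeg p.1 t)
        rw [norm_sub_rev] at h2
        linarith
      have hi : ‖hccSeg p.1 t - z‖⁻¹ ≤ (‖z‖ - R)⁻¹ := inv_anti₀ (by linarith) hd
      calc _ ≤ M * (‖z‖ - R)⁻¹ * ‖p.1.2 - p.1.1‖ := by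
            gcongr
            exact hM t ht'
        _ = _ := by ring
  intro z hz
  have := hentire.apply_eq_of_tendsto_cocompact z hlim
  simpa [hf, hz] using this

/-- Homology version of Cauchy's theorem (Dixon's proof). -/
lemma hcc_dixon {D : Set ℂ} (hD : IsOpen D) (hne : D.Nonempty) (hb : Bornology.IsBounded D)
    {g : ℂ → ℂ} (hg : DifferentiableOn ℂ g D) {c : HccS D →₀ ℂ} (hc : hccBd D c = 0)
    (hN : ∀ w ∉ D, hccN D c w = 0) : hccI D g c = 0 := by
  obtain ⟨z₀, hz₀⟩ := hne
  have hg' : DifferentiableOn ℂ (fun w => (w - z₀) * g w) D :=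
    (differentiableOn_id.sub_const z₀).mul hg
  rw [← hcc_dixon_aux hD hb hg' hc hN z₀ hz₀]
  refine hccI_congr fun w hw => ?_
  by_cases h : w = z₀
  · subst h
    rw [dslope_same]
    have h1 : HasDerivAt (fun v => (v - w) * g v) (1 * g w + (w - w) * deriv g w) w :=
      ((hasDerivAt_id w).sub_const w).mul (hg.differentiableAt (hD.mem_nhds hz₀)).hasDerivAt
    rw [h1.deriv]; ring
  · have : w - z₀ ≠ 0 := sub_ne_zero.2 h
    rw [dslope_of_ne _ h, slope_def_field]
    field_simp
    ring


lemma hccN_const {D S : Set ℂ} {c : HccS D →₀ ℂ} (hc : hccBd D c = 0)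
    (hS : IsPreconnected S) (hSD : ∀ z ∈ S, z ∉ D) {x y : ℂ} (hx : x ∈ S) (hy : y ∈ S) :
    hccN D c x = hccN D c y := by
  refine hS.induction₂ (fun x y => hccN D c x = hccN D c y) ?_ ?_ ?_ hx hy
  · intro x hx
    apply Filter.Eventually.filter_mono nhdsWithin_le_nhds
    filter_upwards [hccN_locConst hc (fun h => hSD x hx (hccTr_sub c h))] with y hy
    exact hy.2.symm
  · intro x y z _ _ _ h1 h2
    exact h1.trans h2
  · intro x y _ _ h
    exact h.symm

lemma hccN_zero_all {D : Set ℂ} (hD : IsOpen D) (hne : D.Nonempty) {c : HccS D →₀ ℂ}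
    (hc : hccBd D c = 0) (hfr : ∀ z ∈ frontier D, hccN D c z = 0) :
    ∀ w ∉ D, hccN D c w = 0 := by
  have hcl : IsClopen {w | w ∉ D ∧ hccN D c w ≠ 0} := by
    constructor
    · rw [← isOpen_compl_iff, isOpen_iff_mem_nhds]
      intro w hw
      by_cases hwD : w ∈ D
      · filter_upwards [hD.mem_nhds hwD] with v hv hv'
        exact hv'.1 hv
      · have h0 : hccN D c w = 0 := by
          by_contra h
          exact hw ⟨hwD, h⟩
        filter_upwards [hccN_locConst hc (fun h => hwD (hccTr_sub c h))] with v hv hv'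
        exact hv'.2 (hv.2.trans h0)
    · rw [isOpen_iff_mem_nhds]
      rintro w ⟨hwD, hw⟩
      have hwc : w ∉ closure D := by
        rw [closure_eq_self_union_frontier]
        rintro (h | h)
        · exact hwD h
        · exact hw (hfr w h)
      filter_upwards [hccN_locConst hc (fun h => hwD (hccTr_sub c h)),
        isClosed_closure.isOpen_compl.mem_nhds hwc] with v hv hv'
      exact ⟨fun h => hv' (subset_closure h), by rw [hv.2]; exact hw⟩
  rcases isClopen_iff.1 hcl with h | h
  · intro w hw
    by_contra h0
    have : w ∈ ({w | w ∉ D ∧ hccN D c w ≠ 0} : Set ℂ) := ⟨hw, h0⟩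
    rw [h] at this
    exact this
  · obtain ⟨z, hz⟩ := hne
    have : z ∈ ({w | w ∉ D ∧ hccN D c w ≠ 0} : Set ℂ) := by rw [h]; trivial
    exact absurd hz this.1

lemma hccSeg_ball {z w : ℂ} {r : ℝ} (hr : 0 < r) (hw : w ∈ Metric.ball z r) {t : ℝ}
    (ht : t ∈ Icc (0 : ℝ) 1) : hccSeg (z, w) t ∈ Metric.ball z r := by
  have := (convex_ball z r).add_smul_sub_mem (Metric.mem_ball_self hr) hw ht
  simpa [hccSeg, Complex.real_smul] using this

/-- Existence of a primitive when all cycle integrals vanish. -/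
lemma hcc_primitive {D : Set ℂ} (hD : IsOpen D) (hconn : IsConnected D) {g : ℂ → ℂ}
    (hg : DifferentiableOn ℂ g D) (h0 : ∀ c, hccBd D c = 0 → hccI D g c = 0) :
    ∃ G : ℂ → ℂ, ∀ z ∈ D, HasDerivAt G (g z) z := by
  classical
  obtain ⟨z₀, hz₀⟩ := hconn.nonempty
  have hreach : ∀ z ∈ D, ∃ c, hccBd D c =
      Finsupp.single z (1 : ℂ) - Finsupp.single z₀ (1 : ℂ) := by
    intro z hz
    refine hconn.isPreconnected.induction₂ (fun x y => ∃ c, hccBd D c =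
      Finsupp.single y (1 : ℂ) - Finsupp.single x (1 : ℂ)) ?_ ?_ ?_ hz₀ hz
    · intro x hx
      apply Filter.Eventually.filter_mono nhdsWithin_le_nhds
      obtain ⟨r, hr, hball⟩ := Metric.isOpen_iff.1 hD x hx
      filter_upwards [Metric.ball_mem_nhds x hr] with y hy
      refine ⟨Finsupp.single ⟨(x, y), fun t ht => hball (hccSeg_ball hr hy ht)⟩ 1, ?_⟩
      simp [hccBd]
    · rintro x y z _ _ _ ⟨c1, h1⟩ ⟨c2, h2⟩
      exact ⟨c1 + c2, by rw [map_add, h1, h2]; abel⟩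
    · rintro x y _ _ ⟨c1, h1⟩
      exact ⟨-c1, by rw [map_neg, h1]; abel⟩
  choose! c hc using hreach
  refine ⟨fun z => hccI D g (c z), fun z hz => ?_⟩
  obtain ⟨r, hr, hball⟩ := Metric.isOpen_iff.1 hD z hz
  obtain ⟨P, hP⟩ := (hg.mono hball).isExactOn_ball
  have hev : (fun z => hccI D g (c z)) =ᶠ[nhds z] fun w => P w + (hccI D g (c z) - P z) := by
    filter_upwards [Metric.ball_mem_nhds z hr] with w hw
    let s : HccS D := ⟨(z, w), fun t ht => hball (hccSeg_ball hr hw ht)⟩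
    have hs : hccI D g (Finsupp.single s 1) = P w - P z := by
      have : hccInt g (z, w) = P w - P z :=
        hccInt_ftc (fun t ht => hP _ (hccSeg_ball hr hw ht)) (hccInt_cont hg.continuousOn s)
      simp [hccI, s, this]
    have hcyc := h0 (c z + Finsupp.single s 1 - c w) (by
      rw [map_sub, map_add, hc z hz, hc w (hball hw)]
      simp [hccBd, s])
    rw [map_sub, map_add, hs] at hcyc
    linear_combination -hcyc
  exact ((hP z (Metric.mem_ball_self hr)).add_const _).congr_of_eventuallyEq hev

lemma hccI_sub_sum {D : Set ℂ} {ι : Type*} (s : Finset ι) {g : ℂ → ℂ} {f : ι → ℂ → ℂ}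
    (a : ι → ℂ) {c : HccS D →₀ ℂ}
    (hg : ContinuousOn g (hccTr c)) (hf : ∀ i, ContinuousOn (f i) (hccTr c)) :
    hccI D (fun z => g z - ∑ i ∈ s, a i * f i z) c =
      hccI D g c - ∑ i ∈ s, a i * hccI D (f i) c := by
  classical
  induction s using Finset.induction_on with
  | empty => simp
  | insert i s hi ih =>
    have : (fun z => g z - ∑ j ∈ insert i s, a j * f j z) =
        fun z => (g z - ∑ j ∈ s, a j * f j z) - a i * f i z := by
      ext z
      rw [Finset.sum_insert hi]; ring
    rw [this, hccI_sub (f := fun z => g z - ∑ j ∈ s, a j * f j z) _ (hf i), ih,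
      Finset.sum_insert hi]
    · ring
    · exact hg.sub (continuousOn_finsetSum _ fun j _ => continuousOn_const.mul (hf j))

/-- Every holomorphic function on `D` is, up to a combination of `k` fixed simple fractions,
a derivative. -/
lemma hcc_log_conj {D : Set ℂ} (hD : IsOpen D) (hconn : IsConnected D)
    (hb : Bornology.IsBounded D) (k : ℕ) (Γ : Fin (k + 1) → Set ℂ)
    (hU : frontier D = ⋃ j, Γ j) (hΓ : ∀ j, IsConnected (Γ j)) :
    ∃ w : Fin k → ℂ, (∀ i, w i ∉ D) ∧ ∀ g : ℂ → ℂ, DifferentiableOn ℂ g D →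
      ∃ a : Fin k → ℂ, ∃ G : ℂ → ℂ, ∀ z ∈ D,
        HasDerivAt G (g z - ∑ i, a i * (z - w i)⁻¹) z := by
  have hfrD : ∀ z ∈ frontier D, z ∉ D := fun z hz hzD => by
    rw [hD.frontier_eq] at hz
    exact hz.2 hzD
  have hΓD : ∀ j, ∀ z ∈ Γ j, z ∉ D := fun j z hz =>
    hfrD z (by rw [hU]; exact mem_iUnion.2 ⟨j, hz⟩)
  obtain ⟨p, hp, hmax⟩ := hb.isCompact_closure.exists_isMaxOn hconn.nonempty.closure
    (continuous_norm.continuousOn)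
  have hsub : D ⊆ Metric.ball 0 ‖p‖ := by
    have h1 : D ⊆ Metric.closedBall 0 ‖p‖ := fun z hz => by
      rw [mem_closedBall_zero_iff]
      exact hmax (subset_closure hz)
    by_cases hp0 : ‖p‖ = 0
    · exfalso
      obtain ⟨z, hz⟩ := hconn.nonempty
      obtain ⟨r, hr, hball⟩ := Metric.isOpen_iff.1 hD z hz
      have h2 : z + ((r / 2 : ℝ) : ℂ) ∈ D := by
        apply hball
        rw [Metric.mem_ball, dist_eq_norm, add_sub_cancel_left, Complex.norm_real,
          Real.norm_of_nonneg (by positivity)]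
        linarith
      have h3 := h1 hz
      have h4 := h1 h2
      rw [hp0, Metric.closedBall_zero, mem_singleton_iff] at h3 h4
      rw [h3, zero_add] at h4
      have : r / 2 = 0 := by exact_mod_cast h4
      linarith
    · have := interior_mono h1
      rwa [hD.interior_eq, interior_closedBall _ hp0] at this
  have hpD : p ∉ D := fun h => by simpa using hsub h
  have hpfr : p ∈ frontier D := by rw [hD.frontier_eq]; exact ⟨hp, hpD⟩
  have hNp : ∀ c, hccBd D c = 0 → hccN D c p = 0 := by
    intro c hc
    refine hccI_zero_of_prim (G := fun z => Complex.log (1 - z / p)) hc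
      (hcc_inv_cont fun h => hpD (hccTr_sub c h)) fun z hz => ?_
    have hzp : ‖z‖ < ‖p‖ := by simpa using hsub (hccTr_sub c hz)
    have hp0 : p ≠ 0 := norm_pos_iff.1 ((norm_nonneg z).trans_lt hzp)
    have hd : HasDerivAt (fun z => 1 - z / p) (-(1 / p)) z :=
      ((hasDerivAt_id z).div_const p).const_sub 1
    have hs : 1 - z / p ∈ Complex.slitPlane := by
      rw [sub_eq_add_neg]
      apply Complex.mem_slitPlane_of_norm_lt_one
      rw [norm_neg, norm_div, div_lt_one (norm_pos_iff.2 hp0)]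
      exact hzp
    convert hd.clog hs using 1
    have h1 : z - p ≠ 0 := by
      rw [sub_ne_zero]; rintro rfl; exact lt_irrefl _ hzp
    have h2 : p - z ≠ 0 := by
      rw [sub_ne_zero]; rintro rfl; exact lt_irrefl _ hzp
    have h3 : 1 - z / p ≠ 0 := by
      have : 1 - z / p = (p - z) / p := by field_simp
      rw [this]; exact div_ne_zero h2 hp0
    field_simp
    ring
  obtain ⟨m, hm⟩ := mem_iUnion.1 (hU ▸ hpfr)
  choose q hq using fun j => (hΓ j).nonempty
  refine ⟨fun i => q (m.succAbove i), fun i => hΓD _ _ (hq _), fun g hg => ?_⟩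
  set w : Fin k → ℂ := fun i => q (m.succAbove i) with hw
  have hwD : ∀ i, w i ∉ D := fun i => hΓD _ _ (hq _)
  have hzero : ∀ c, hccBd D c = 0 → (∀ i, hccN D c (w i) = 0) → hccI D g c = 0 := by
    intro c hc hci
    refine hcc_dixon hD hconn.nonempty hb hg hc
      (hccN_zero_all hD hconn.nonempty hc fun z hz => ?_)
    obtain ⟨j, hj⟩ := mem_iUnion.1 (hU ▸ hz)
    by_cases hjm : j = m
    · subst hjm
      rw [hccN_const hc (hΓ j).isPreconnected (hΓD j) hj hm, hNp c hc]
    · obtain ⟨i, rfl⟩ := Fin.exists_succAbove_eq hjm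
      rw [hccN_const hc (hΓ _).isPreconnected (hΓD _) hj (hq _)]
      exact hci i
  have hle : ⨅ i : Fin k, LinearMap.ker
      ((hccI D (fun z => (z - w i)⁻¹)).domRestrict (LinearMap.ker (hccBd D))) ≤
      LinearMap.ker ((hccI D g).domRestrict (LinearMap.ker (hccBd D))) := by
    rintro ⟨c, hc⟩ hcL
    rw [Submodule.mem_iInf] at hcL
    exact hzero c hc fun i => hcL i
  have hspan : (hccI D g).domRestrict (LinearMap.ker (hccBd D)) ∈ Submodule.span ℂ
      (range (fun i : Fin k =>
        (hccI D (fun z => (z - w i)⁻¹)).domRestrict (LinearMap.ker (hccBd D)))) :=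
    mem_span_of_iInf_ker_le_ker (ι := Fin k) (𝕜 := ℂ) (E := ↥(LinearMap.ker (hccBd D))) hle
  obtain ⟨a, ha⟩ := (Submodule.mem_span_range_iff_exists_fun ℂ).1 hspan
  refine ⟨a, hcc_primitive hD hconn ?_ ?_⟩
  · refine hg.sub (DifferentiableOn.fun_sum fun i _ => ?_)
    refine DifferentiableOn.const_mul ?_ _
    refine (differentiableOn_id.sub_const _).inv fun z hz => ?_
    refine sub_ne_zero.2 ?_
    rintro h
    exact hwD i (h ▸ hz)
  · intro c hc
    rw [hccI_sub_sum Finset.univ a (f := fun i z => (z - w i)⁻¹)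
      (hg.continuousOn.mono (hccTr_sub c))
      (fun i => hcc_inv_cont fun h => hwD i (hccTr_sub c h))]
    have := LinearMap.congr_fun ha ⟨c, hc⟩
    simp only [LinearMap.coe_sum, Finset.sum_apply, LinearMap.smul_apply,
      LinearMap.domRestrict_apply, smul_eq_mul] at this
    rw [← this, sub_self]


/-! ### Harmonic functions -/

/-- The real-linear form `v ↦ Re (b v)`. -/
noncomputable def hccRe (b : ℂ) : ℂ →L[ℝ] ℝ :=
  Complex.reCLM.comp (ContinuousLinearMap.mul ℝ ℂ b)

@[simp] lemma hccRe_apply (b v : ℂ) : hccRe b v = (b * v).re := by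
  simp [hccRe]

lemma hcc_log_deriv {z w : ℂ} (h : z ≠ w) :
    HasFDerivAt (fun ζ => Real.log ‖ζ - w‖) (hccRe (z - w)⁻¹) z := by
  have hzw : z - w ≠ 0 := sub_ne_zero.2 h
  have hd : HasDerivAt (fun ζ => Complex.log ((ζ - w) / (z - w))) (z - w)⁻¹ z := by
    have h1 : HasDerivAt (fun ζ => (ζ - w) / (z - w)) (1 / (z - w)) z :=
      ((hasDerivAt_id z).sub_const w).div_const _
    convert h1.clog (by rw [div_self hzw]; exact Complex.one_mem_slitPlane) using 1
    rw [div_self hzw]; simp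
  have hr := (Complex.reCLM.hasFDerivAt.comp z (hd.hasFDerivAt.restrictScalars ℝ)).add_const
    (Real.log ‖z - w‖)
  have hev : (fun ζ => Real.log ‖ζ - w‖) =ᶠ[nhds z]
      fun ζ => (Complex.reCLM ∘ fun ζ => Complex.log ((ζ - w) / (z - w))) ζ +
        Real.log ‖z - w‖ := by
    filter_upwards [isOpen_ne.mem_nhds h] with ζ hζ
    simp only [Function.comp_apply, Complex.reCLM_apply, Complex.log_re, norm_div]
    rw [Real.log_div (norm_ne_zero_iff.2 (sub_ne_zero.2 hζ)) (norm_ne_zero_iff.2 hzw)]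
    ring
  refine (hr.congr_of_eventuallyEq hev).congr_fderiv ?_
  ext v
  simp [mul_comm]

lemma hcc_logsum_deriv {k : ℕ} {w : Fin k → ℂ} {z : ℂ} (h : ∀ i, z ≠ w i) (α : Fin k → ℝ) :
    HasFDerivAt (fun ζ => ∑ i, α i * Real.log ‖ζ - w i‖)
      (hccRe (∑ i, (α i : ℂ) * (z - w i)⁻¹)) z := by
  have := HasFDerivAt.fun_sum (u := Finset.univ) fun i _ => (hcc_log_deriv (h i)).const_mul (α i)
  refine this.congr_fderiv ?_
  ext v
  simp [Finset.sum_mul, mul_assoc]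

/-- Logarithmic conjugation. -/
lemma hcc_harm {D : Set ℂ} (hD : IsOpen D) {k : ℕ} {w : Fin k → ℂ} (hw : ∀ i, w i ∉ D)
    (hprim : ∀ g : ℂ → ℂ, DifferentiableOn ℂ g D →
      ∃ a : Fin k → ℂ, ∃ G : ℂ → ℂ, ∀ z ∈ D,
        HasDerivAt G (g z - ∑ i, a i * (z - w i)⁻¹) z)
    {h : ℂ → ℝ} (hh : HarmonicOnR h D) :
    ∃ α : Fin k → ℝ, ∃ F : ℂ → ℂ, DifferentiableOn ℂ F D ∧
      ∀ z ∈ D, (F z).re = h z - ∑ i, α i * Real.log ‖z - w i‖ := by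
  have hharm : ∀ z ∈ D, InnerProductSpace.HarmonicAt h z := by
    intro z hz
    refine ⟨hh.1.contDiffAt (hD.mem_nhds hz), ?_⟩
    filter_upwards [hD.mem_nhds hz] with v hv
    rw [InnerProductSpace.laplacian_eq_iteratedFDeriv_complexPlane]
    exact hh.2 v hv
  set g : ℂ → ℂ := fun z => fderiv ℝ h z 1 - I * fderiv ℝ h z I with hg
  have hgd : DifferentiableOn ℂ g D := fun z hz =>
    (HarmonicAt.differentiableAt_complex_partial (hharm z hz)).differentiableWithinAt
  have hhd : ∀ z ∈ D, HasFDerivAt h (hccRe (g z)) z := by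
    intro z hz
    have h1 : HasFDerivAt h (fderiv ℝ h z) z :=
      ((hharm z hz).1.differentiableAt two_ne_zero).hasFDerivAt
    refine h1.congr_fderiv ?_
    ext v
    have hv : v = v.re • (1 : ℂ) + v.im • (I : ℂ) := by simp
    conv_lhs => rw [hv, map_add, map_smul, map_smul]
    simp [hg]
    ring
  obtain ⟨a, G, hG⟩ := hprim g hgd
  refine ⟨fun i => (a i).re, fun z => ((h z - ∑ i, (a i).re * Real.log ‖z - w i‖ : ℝ) : ℂ) +
    I * (((G z).im + ∑ i, (a i).im * Real.log ‖z - w i‖ : ℝ) : ℂ), ?_, ?_⟩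
  · intro z hz
    apply DifferentiableAt.differentiableWithinAt
    have hne : ∀ i, z ≠ w i := fun i hi => hw i (hi ▸ hz)
    have hS := hcc_logsum_deriv hne fun i => (a i).re
    have hT := hcc_logsum_deriv hne fun i => (a i).im
    have hGi := Complex.imCLM.hasFDerivAt.comp z ((hG z hz).hasFDerivAt.restrictScalars ℝ)
    have hA := Complex.ofRealCLM.hasFDerivAt.comp z ((hhd z hz).sub hS)
    have hB := (Complex.ofRealCLM.hasFDerivAt.comp z (hGi.add hT)).const_mul I
    have hF := hA.add hB
    have hsum : ∑ i, a i * (z - w i)⁻¹ =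
        ∑ i, ((a i).re : ℂ) * (z - w i)⁻¹ + I * ∑ i, ((a i).im : ℂ) * (z - w i)⁻¹ := by
      rw [Finset.mul_sum, ← Finset.sum_add_distrib]
      refine Finset.sum_congr rfl fun i _ => ?_
      conv_lhs => rw [← Complex.re_add_im (a i)]
      ring
    set S := ∑ i, ((a i).re : ℂ) * (z - w i)⁻¹
    set T := ∑ i, ((a i).im : ℂ) * (z - w i)⁻¹
    have := hasFDerivAt_of_restrictScalars (𝕜' := ℂ) ℝ (f' := ContinuousLinearMap.mul ℂ ℂ (g z - S)) hF ?_
    · exact this.differentiableAt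
    · ext v
      rw [hsum]
      apply Complex.ext
      · simp
      · simp
        ring
  · intro z _
    simp

/-- A holomorphic function whose real part is continuous up to the boundary with finitely many
boundary values has constant real part. -/
lemma hcc_indep {D : Set ℂ} (hD : IsOpen D) (hconn : IsConnected D)
    (hb : Bornology.IsBounded D) {u : ℂ → ℝ} (hu : ContinuousOn u (closure D))
    {V : Set ℝ} (hV : V.Finite) (hfr : ∀ z ∈ frontier D, u z ∈ V)
    {F : ℂ → ℂ} (hF : DifferentiableOn ℂ F D) (hFu : ∀ z ∈ D, (F z).re = u z) :
    ∃ v, ∀ z ∈ closure D, u z = v := by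
  rcases (hF.analyticOnNhd hD).is_constant_or_isOpen hconn.isPreconnected with ⟨v, hv⟩ | hop
  · refine ⟨v.re, ?_⟩
    have h1 : EqOn u (fun _ => v.re) D := fun z hz => by
      simp only [← hFu z hz, hv z hz]
    exact h1.of_subset_closure hu continuousOn_const subset_closure subset_rfl
  · exfalso
    have hFD : IsOpen (F '' D) := hop D subset_rfl hD
    obtain ⟨z₀, hz₀⟩ := hconn.nonempty
    obtain ⟨r, hr, hball⟩ := Metric.isOpen_iff.1 hFD (F z₀) ⟨z₀, hz₀, rfl⟩
    obtain ⟨x, hx, hxV⟩ : ∃ x ∈ Ioo (0 : ℝ) r, (F z₀).re + x ∉ V := by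
      by_contra! hcon
      have hinf : (Ioo (0 : ℝ) r).Infinite := Ioo_infinite hr
      refine hinf ?_
      refine Set.Finite.of_finite_image (f := fun x => (F z₀).re + x) (hV.subset ?_)
        (fun x _ y _ hxy => by simpa using hxy)
      rintro _ ⟨x, hx, rfl⟩
      exact hcon x hx
    obtain ⟨z₁, hz₁, hFz₁⟩ := hball (show F z₀ + (x : ℂ) ∈ Metric.ball (F z₀) r by
      rw [Metric.mem_ball, dist_eq_norm, add_sub_cancel_left, Complex.norm_real,
        Real.norm_of_nonneg hx.1.le]
      exact hx.2)
    set b := (F z₀).re + x with hbdef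
    have huz₁ : u z₁ = b := by rw [← hFu z₁ hz₁, hFz₁]; simp [hbdef]
    have hK : IsCompact (closure D ∩ u ⁻¹' {b}) :=
      hb.isCompact_closure.of_isClosed_subset
        (hu.preimage_isClosed_of_isClosed isClosed_closure isClosed_singleton) inter_subset_left
    have hKD : closure D ∩ u ⁻¹' {b} ⊆ D := by
      rintro z ⟨hz, hzb⟩
      by_contra hzD
      have : z ∈ frontier D := by rw [hD.frontier_eq]; exact ⟨hz, hzD⟩
      have h2 := hfr z this
      rw [hzb] at h2
      exact hxV h2
    obtain ⟨z₂, hz₂, hmax⟩ := hK.exists_isMaxOn ⟨z₁, subset_closure hz₁, huz₁⟩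
      (f := fun z => (F z).im)
      (Complex.continuous_im.comp_continuousOn (hF.continuousOn.mono hKD))
    obtain ⟨s, hs, hball2⟩ := Metric.isOpen_iff.1 hFD (F z₂) ⟨z₂, hKD hz₂, rfl⟩
    obtain ⟨z₃, hz₃, hFz₃⟩ := hball2 (show F z₂ + ((s / 2 : ℝ) : ℂ) * I ∈ Metric.ball (F z₂) s by
      rw [Metric.mem_ball, dist_eq_norm, add_sub_cancel_left, norm_mul, Complex.norm_I, mul_one,
        Complex.norm_real, Real.norm_of_nonneg (by positivity)]
      linarith)
    have hz₃K : z₃ ∈ closure D ∩ u ⁻¹' {b} := by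
      refine ⟨subset_closure hz₃, ?_⟩
      have h2 : u z₂ = b := hz₂.2
      rw [mem_preimage, mem_singleton_iff, ← h2, ← hFu z₃ hz₃, hFz₃, ← hFu z₂ (hKD hz₂)]
      simp
    have h3 : (F z₃).im ≤ (F z₂).im := hmax hz₃K
    rw [hFz₃] at h3
    simp at h3
    linarith


/-- Lemma 2.1: on a bounded domain `D` whose boundary has exactly `n ≥ 2` connected
components, each nondegenerate, every real harmonic function `h` on `D` admits a unique
tuple `(c_1, …, c_{n-1})` of real constants such that `h + ∑ c_j ω_j` has a single-valued
harmonic conjugate, i.e. is the real part of a holomorphic function on `D`. -/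
theorem holomorphic_conjugate_correction_exists_unique
    (D : Set ℂ) (hD_open : IsOpen D) (hD_conn : IsConnected D)
    (hD_bdd : Bornology.IsBounded D)
    (n : ℕ) (hn : 2 ≤ n)
    (Γ : Fin n → Set ℂ)
    (hΓ_union : frontier D = ⋃ j, Γ j)
    (hΓ_conn : ∀ j, IsConnected (Γ j))
    (hΓ_closed : ∀ j, IsClosed (Γ j))
    (hΓ_disj : Pairwise (Function.onFun Disjoint Γ))
    (hΓ_nontriv : ∀ j, (Γ j).Nontrivial)
    (ω : Fin (n - 1) → ℂ → ℝ)
    (hω_cont : ∀ j, ContinuousOn (ω j) (closure D))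
    (hω_harm : ∀ j, HarmonicOnR (ω j) D)
    (hω_one : ∀ j, ∀ z ∈ Γ (Fin.castLE (Nat.sub_le n 1) j), ω j z = 1)
    (hω_zero : ∀ j, ∀ k, k ≠ Fin.castLE (Nat.sub_le n 1) j → ∀ z ∈ Γ k, ω j z = 0)
    (h : ℂ → ℝ) (hh : HarmonicOnR h D) :
    ∃! c : Fin (n - 1) → ℝ, ∃ F : ℂ → ℂ, DifferentiableOn ℂ F D ∧
      ∀ z ∈ D, (F z).re = h z + ∑ j, c j * ω j z := by
  obtain ⟨k, rfl⟩ : ∃ k, n = k + 1 := ⟨n - 1, by omega⟩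
  have hΓfr : ∀ j, ∀ z ∈ Γ j, z ∈ closure D := fun j z hz =>
    frontier_subset_closure (by rw [hΓ_union]; exact mem_iUnion.2 ⟨j, hz⟩)
  -- independence
  have hind : ∀ c : Fin k → ℝ, (∃ F : ℂ → ℂ, DifferentiableOn ℂ F D ∧
      ∀ z ∈ D, (F z).re = ∑ j, c j * ω j z) → c = 0 := by
    rintro c ⟨F, hF, hFu⟩
    have hval : ∀ j : Fin k, ∀ z ∈ Γ (Fin.castLE (Nat.sub_le (k + 1) 1) j),
        ∑ i, c i * ω i z = c j := by
      intro j z hz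
      rw [Finset.sum_eq_single j]
      · rw [hω_one j z hz, mul_one]
      · intro i _ hij
        rw [hω_zero i _ (fun he => hij ?_) z hz, mul_zero]
        exact (Fin.castLE_injective _ he).symm
      · simp
    have hlast : ∀ z ∈ Γ (Fin.last k), ∑ i, c i * ω i z = 0 := by
      intro z hz
      refine Finset.sum_eq_zero fun i _ => ?_
      rw [hω_zero i _ (fun he => ?_) z hz, mul_zero]
      have := congrArg Fin.val he
      simp at this
      omega
    obtain ⟨v, hv⟩ := hcc_indep hD_open hD_conn hD_bdd
      (u := fun z => ∑ j, c j * ω j z) (V := insert 0 (range c))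
      (continuousOn_finsetSum _ fun j _ => continuousOn_const.mul (hω_cont j))
      ((finite_range c).insert 0) (by
        intro z hz
        rw [hΓ_union] at hz
        obtain ⟨j, hj⟩ := mem_iUnion.1 hz
        by_cases hjl : j = Fin.last k
        · subst hjl
          left
          exact hlast z hj
        · right
          have hlt : j.val < k := by
            have := j.2
            have : j.val ≠ k := fun he => hjl (Fin.ext he)
            omega
          exact ⟨⟨j.val, hlt⟩, (hval ⟨j.val, hlt⟩ z hj).symm⟩)
      hF hFu
    obtain ⟨z₀, hz₀⟩ := (hΓ_conn (Fin.last k)).nonempty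
    have hv0 : v = 0 := by
      rw [← hv z₀ (hΓfr _ _ hz₀)]
      exact hlast z₀ hz₀
    ext j
    obtain ⟨z, hz⟩ := (hΓ_conn (Fin.castLE (Nat.sub_le (k + 1) 1) j)).nonempty
    rw [Pi.zero_apply, ← hval j z hz, ← hv0]
    exact hv z (hΓfr _ _ hz)
  obtain ⟨w, hwD, hprim⟩ := hcc_log_conj hD_open hD_conn hD_bdd k Γ hΓ_union hΓ_conn
  obtain ⟨α, F, hF, hFh⟩ := hcc_harm hD_open hwD hprim hh
  choose A E hE hEω using fun j => hcc_harm hD_open hwD hprim (hω_harm j)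
  -- the period map
  let Φ : (Fin k → ℝ) →ₗ[ℝ] (Fin k → ℝ) :=
    ∑ j, (LinearMap.proj j : (Fin k → ℝ) →ₗ[ℝ] ℝ).smulRight (A j)
  have hΦ : ∀ c i, Φ c i = ∑ j, c j * A j i := by
    intro c i
    simp [Φ]
  have hcomb : ∀ c : Fin k → ℝ, ∀ z ∈ D, (∑ j, (c j : ℂ) * E j z).re =
      ∑ j, c j * ω j z - ∑ i, Φ c i * Real.log ‖z - w i‖ := by
    intro c z hz
    simp only [Complex.re_sum, Complex.re_ofReal_mul, hEω _ z hz, hΦ, mul_sub,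
      Finset.sum_sub_distrib, Finset.mul_sum, Finset.sum_mul]
    rw [Finset.sum_comm]
    simp only [mul_assoc]
  have hdiff : ∀ c : Fin k → ℝ, DifferentiableOn ℂ (fun z => ∑ j, (c j : ℂ) * E j z) D := fun c =>
    DifferentiableOn.fun_sum fun j _ => (hE j).const_mul _
  have hinj : Function.Injective Φ := by
    rw [injective_iff_map_eq_zero]
    intro c hc
    refine hind c ⟨_, hdiff c, fun z hz => ?_⟩
    rw [hcomb c z hz, hc]
    simp
  obtain ⟨c, hc⟩ := (LinearMap.injective_iff_surjective.1 hinj) (-α)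
  refine ⟨c, ⟨fun z => F z + ∑ j, (c j : ℂ) * E j z, hF.add (hdiff c), fun z hz => ?_⟩, ?_⟩
  · rw [Complex.add_re, hFh z hz, hcomb c z hz, hc]
    simp
  · intro c₀ hc₀
    obtain ⟨F₁, hF₁, hFh₁⟩ := hc₀
    let c₁ : Fin k → ℝ := c₀
    have hFh₂ : ∀ z ∈ D, (F₁ z).re = h z + ∑ j, c₁ j * ω j z := hFh₁
    have := hind (c₁ - c) ⟨fun z => F₁ z - (F z + ∑ j, (c j : ℂ) * E j z),
      hF₁.sub (hF.add (hdiff c)), fun z hz => ?_⟩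
    · exact sub_eq_zero.1 this
    · have e : ∑ j, (c₁ - c) j * ω j z = ∑ j, c₁ j * ω j z - ∑ j, c j * ω j z := by
        rw [← Finset.sum_sub_distrib]
        exact Finset.sum_congr rfl fun j _ => sub_mul _ _ _
      rw [e, Complex.sub_re, Complex.add_re, hFh z hz, hcomb c z hz, hc, hFh₂ z hz]
      simp
end

section
/- Let D ⊆ ℂ be a bounded domain whose boundary ∂D has exactly n ≥ 2 connected components Γ_1, …, Γ_n, each containing more than one point. For 1 ≤ j ≤ n−1 let ω_j : cl(D) → ℝ be continuous on cl(D), harmonic on D, with ω_j ≡ 1 on Γ_j and ω_j ≡ 0 on Γ_k for every k ≠ j. If λ_1, …, λ_{n−1} are real numbers such that Σ_{k=1}^{n−1} λ_k ω_k is the real part of a (single-valued) holomorphic function on D, then λ_1 = λ_2 = ⋯ = λ_{n−1} = 0. -/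
open Complex Set

/-- If a real linear combination `∑ λ_k ω_k` of the harmonic measures `ω_k` of the first
`n - 1` boundary components of a bounded domain `D` (whose boundary has exactly `n ≥ 2`
connected components, each nondegenerate) is the real part of a single-valued holomorphic
function on `D`, then all the coefficients `λ_k` vanish. -/
theorem coeffs_vanish_of_real_part_holomorphic
    (D : Set ℂ) (hD_open : IsOpen D) (hD_conn : IsConnected D)
    (hD_bdd : Bornology.IsBounded D)
    (n : ℕ) (hn : 2 ≤ n)
    (Γ : Fin n → Set ℂ)
    (hΓ_union : frontier D = ⋃ j, Γ j)
    (hΓ_conn : ∀ j, IsConnected (Γ j))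
    (hΓ_closed : ∀ j, IsClosed (Γ j))
    (hΓ_disj : Pairwise (Function.onFun Disjoint Γ))
    (hΓ_nontriv : ∀ j, (Γ j).Nontrivial)
    (ω : Fin (n - 1) → ℂ → ℝ)
    (hω_cont : ∀ j, ContinuousOn (ω j) (closure D))
    (hω_harm : ∀ j, HarmonicOnR (ω j) D)
    (hω_one : ∀ j, ∀ z ∈ Γ (Fin.castLE (Nat.sub_le n 1) j), ω j z = 1)
    (hω_zero : ∀ j, ∀ k, k ≠ Fin.castLE (Nat.sub_le n 1) j → ∀ z ∈ Γ k, ω j z = 0)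
    (lam : Fin (n - 1) → ℝ)
    (hlam : ∃ F : ℂ → ℂ, DifferentiableOn ℂ F D ∧
      ∀ z ∈ D, (F z).re = ∑ k, lam k * ω k z) :
    ∀ k, lam k = 0 := by
  obtain ⟨F, hF, hre⟩ := hlam
  have hlast : n - 1 < n := by omega
  set U : ℂ → ℝ := fun z => ∑ k, lam k * ω k z with hU
  have hUc : ContinuousOn U (closure D) :=
    continuousOn_finsetSum _ fun k _ => (hω_cont k).const_smul (lam k)
  have hsub : ∀ j, Γ j ⊆ closure D := fun j z hz =>
    frontier_subset_closure (hΓ_union ▸ mem_iUnion.2 ⟨j, hz⟩)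
  have hval : ∀ k, ∀ z ∈ Γ (Fin.castLE (Nat.sub_le n 1) k), U z = lam k := by
    intro k z hz
    simp only [hU]
    rw [Finset.sum_eq_single k]
    · rw [hω_one k z hz, mul_one]
    · intro b _ hb
      rw [hω_zero b _ _ z hz, mul_zero]
      intro h
      exact hb (Fin.castLE_injective _ h).symm
    · simp
  have hval0 : ∀ z ∈ Γ ⟨n - 1, hlast⟩, U z = 0 := by
    intro z hz
    simp only [hU]
    refine Finset.sum_eq_zero fun b _ => ?_
    rw [hω_zero b _ _ z hz, mul_zero]
    intro h
    have h1 := congrArg Fin.val h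
    have h2 := b.2
    simp only [Fin.val_castLE] at h1
    omega
  -- finitely many boundary values
  have hfin : (U '' frontier D).Finite := by
    refine ((Set.finite_range lam).insert 0).subset ?_
    rintro _ ⟨z, hz, rfl⟩
    rw [hΓ_union] at hz
    obtain ⟨j, hj⟩ := mem_iUnion.1 hz
    by_cases h : j.1 < n - 1
    · exact Or.inr ⟨⟨j.1, h⟩, (hval ⟨j.1, h⟩ z hj).symm⟩
    · left
      apply hval0
      have : j = ⟨n - 1, hlast⟩ := Fin.ext (by have := j.2; simp only; omega)
      rwa [← this]
  -- `U` is constant on `D`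
  have hconst : ∃ c, ∀ z ∈ D, U z = c := by
    rcases (hF.analyticOnNhd hD_open).is_constant_or_isOpen hD_conn.isPreconnected with h | h
    · obtain ⟨w, hw⟩ := h
      exact ⟨w.re, fun z hz => by rw [← hw z hz, hre z hz]⟩
    · exfalso
      have hop : IsOpen (F '' D) := h D Subset.rfl hD_open
      have hop' : IsOpen (Complex.re '' (F '' D)) := Complex.isOpenMap_re _ hop
      obtain ⟨z0, hz0⟩ := hD_conn.nonempty
      have hinf : (Complex.re '' (F '' D)).Infinite :=
        infinite_of_mem_nhds _ (hop'.mem_nhds ⟨F z0, ⟨z0, hz0, rfl⟩, rfl⟩)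
      obtain ⟨t, ⟨_, ⟨z, hz, rfl⟩, rfl⟩, htn⟩ := hinf.exists_notMem_finite hfin
      set t := (F z).re with ht
      have hKc : IsCompact (closure D ∩ U ⁻¹' {t}) :=
        hD_bdd.isCompact_closure.of_isClosed_subset
          (hUc.preimage_isClosed_of_isClosed isClosed_closure isClosed_singleton)
          inter_subset_left
      have hKD : closure D ∩ U ⁻¹' {t} ⊆ D := by
        rintro x ⟨hx, hxt⟩
        by_contra hxD
        refine htn ⟨x, ⟨hx, ?_⟩, hxt⟩
        rwa [hD_open.interior_eq]
      have hFK : IsCompact (Complex.im '' (F '' (closure D ∩ U ⁻¹' {t}))) :=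
        (hKc.image_of_continuousOn (hF.continuousOn.mono hKD)).image Complex.continuous_im
      set Y : Set ℝ := {y : ℝ | (⟨t, y⟩ : ℂ) ∈ F '' D} with hY
      have hYeq : Y = Complex.im '' (F '' (closure D ∩ U ⁻¹' {t})) := by
        ext y
        constructor
        · rintro ⟨x, hx, hxy⟩
          refine ⟨F x, ⟨x, ⟨subset_closure hx, ?_⟩, rfl⟩, by rw [hxy]⟩
          have := hre x hx
          rw [hxy] at this
          exact this.symm
        · rintro ⟨_, ⟨x, hx, rfl⟩, rfl⟩
          refine ⟨x, hKD hx, Complex.ext ?_ rfl⟩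
          rw [hre x (hKD hx)]
          exact hx.2
      have hYo : IsOpen Y := by
        have hc : Continuous fun y : ℝ => (⟨t, y⟩ : ℂ) := by
          have : (fun y : ℝ => (⟨t, y⟩ : ℂ)) = fun y : ℝ => (t : ℂ) + y * Complex.I := by
            ext y; apply Complex.ext <;> simp
          rw [this]; fun_prop
        exact hop.preimage hc
      have hYk : IsCompact Y := hYeq ▸ hFK
      have hYne : Y.Nonempty := ⟨(F z).im, z, hz, rfl⟩
      have huniv := IsClopen.eq_univ ⟨hYk.isClosed, hYo⟩ hYne
      exact noncompact_univ ℝ (huniv ▸ hYk)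
  obtain ⟨c, hc⟩ := hconst
  have hcl : ∀ z ∈ closure D, U z = c := fun z hz =>
    (show EqOn U (fun _ => c) D from hc).of_subset_closure hUc continuousOn_const
      subset_closure Subset.rfl hz
  obtain ⟨z1, hz1⟩ := (hΓ_conn ⟨n - 1, hlast⟩).nonempty
  intro k
  obtain ⟨z2, hz2⟩ := (hΓ_conn (Fin.castLE (Nat.sub_le n 1) k)).nonempty
  rw [← hval k z2 hz2, hcl z2 (hsub _ hz2), ← hcl z1 (hsub _ hz1), hval0 z1 hz1]
end

section
/- Let D ⊆ ℂ be a bounded domain, let F be holomorphic on D, and let u : cl(D) → ℝ be continuous with u(z) = Re F(z) for all z ∈ D. If the set of values u(∂D) is finite, then F is constant on D. -/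
open Complex Set

/-- If `F` is holomorphic on a bounded domain `D`, `u` is continuous on `cl(D)` and agrees
with `Re F` on `D`, and `u` takes only finitely many values on `∂D`, then `F` is constant
on `D`. -/
theorem holomorphic_const_of_finite_boundary_real_values
    (D : Set ℂ) (hD_open : IsOpen D) (hD_conn : IsConnected D)
    (hD_bdd : Bornology.IsBounded D)
    (F : ℂ → ℂ) (hF : DifferentiableOn ℂ F D)
    (u : ℂ → ℝ) (hu_cont : ContinuousOn u (closure D))
    (huF : ∀ z ∈ D, u z = (F z).re)
    (hfin : (u '' frontier D).Finite) :
    ∀ z ∈ D, ∀ w ∈ D, F z = F w := by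
  rcases (hF.analyticOnNhd hD_open).is_constant_or_isOpen hD_conn.isPreconnected with
    ⟨w, hw⟩ | hopen
  · intro z hz z' hz'
    rw [hw z hz, hw z' hz']
  exfalso
  have hV : IsOpen (F '' D) := hopen D subset_rfl hD_open
  have hR : IsOpen (Complex.re '' (F '' D)) := Complex.isOpenMap_re _ hV
  have hRn : (Complex.re '' (F '' D)).Nonempty := (hD_conn.nonempty.image F).image _
  have hinf : (Complex.re '' (F '' D)).Infinite := by
    obtain ⟨x, hx⟩ := hRn
    exact infinite_of_mem_nhds x (hR.mem_nhds hx)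
  obtain ⟨c, hc, hcn⟩ := hinf.exists_notMem_finite hfin
  obtain ⟨_, ⟨z₁, hz₁, rfl⟩, hz₁c⟩ := hc
  have hcl : IsCompact (closure D) := hD_bdd.isCompact_closure
  have hKc : IsCompact (closure D ∩ u ⁻¹' {c}) :=
    hcl.of_isClosed_subset (hu_cont.preimage_isClosed_of_isClosed isClosed_closure
      isClosed_singleton) inter_subset_left
  have hKD : closure D ∩ u ⁻¹' {c} ⊆ D := by
    rintro z ⟨hz, hzc⟩
    by_contra hzD
    refine hcn ⟨z, ?_, hzc⟩
    rw [hD_open.frontier_eq]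
    exact ⟨hz, hzD⟩
  have hKn : (closure D ∩ u ⁻¹' {c}).Nonempty :=
    ⟨z₁, subset_closure hz₁, by simp [huF z₁ hz₁, hz₁c]⟩
  obtain ⟨z₀, hz₀, hmax⟩ := hKc.exists_isMaxOn hKn
    (Complex.continuous_im.comp_continuousOn (hF.continuousOn.mono hKD))
  have hz₀D := hKD hz₀
  obtain ⟨ε, hε, hball⟩ := Metric.isOpen_iff.1 hV (F z₀) ⟨z₀, hz₀D, rfl⟩
  have hmem : F z₀ + ((ε / 2 : ℝ) : ℂ) * I ∈ Metric.ball (F z₀) ε := by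
    rw [mem_ball_iff_norm, add_sub_cancel_left, norm_mul, norm_I, mul_one, Complex.norm_real,
      Real.norm_of_nonneg (by positivity)]
    linarith
  obtain ⟨w, hw, hFw⟩ := hball hmem
  have hwre : (F w).re = (F z₀).re := by
    rw [hFw, Complex.add_re, Complex.re_ofReal_mul, Complex.I_re, mul_zero, add_zero]
  have hwim : (F w).im = (F z₀).im + ε / 2 := by
    rw [hFw, Complex.add_im, Complex.im_ofReal_mul, Complex.I_im, mul_one]
  have hz₀c : u z₀ = c := hz₀.2
  have hwK : w ∈ closure D ∩ u ⁻¹' {c} := by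
    refine ⟨subset_closure hw, ?_⟩
    change u w = c
    rw [huF w hw, hwre, ← huF z₀ hz₀D, hz₀c]
  have hle : (F w).im ≤ (F z₀).im := hmax hwK
  linarith
end

section
/- Let D ⊆ ℂ be a bounded simply connected domain. Assume D is a Dirichlet domain: for every continuous φ : ∂D → ℝ there is a continuous function on cl(D), harmonic on D, agreeing with φ on ∂D. Let f : ∂D → ℂ be continuous and let u, v : cl(D) → ℂ be continuous on cl(D), harmonic on D, with u(z) = f(z) and v(z) = z·f(z) for z ∈ ∂D. Suppose f does not extend holomorphically through D. Then there exist a point a ∈ D, a real number γ, a real number α > 0, and holomorphic functions F and G on D such that Re( e^{iγ}(v(z) − a·u(z)) − (z−a)F(z) − (z−a)G(z) ) = α for all z ∈ D. -/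
open Complex Set

/-- A complex-valued function is harmonic on a set if its real and imaginary parts are. -/
def HarmonicOnC (u : ℂ → ℂ) (s : Set ℂ) : Prop :=
  HarmonicOnR (fun z => (u z).re) s ∧ HarmonicOnR (fun z => (u z).im) s

/-- The complex numbers with the discrete topology (the fibre of the covering of primitives). -/
structure DiscC where
  val : ℂ

instance : TopologicalSpace DiscC := ⊥
instance : DiscreteTopology DiscC := ⟨rfl⟩

/-- Any two local primitives differ by a constant on a preconnected open set. -/
lemma primitive_sub_const {s : Set ℂ} (hs : IsOpen s) (hs' : IsPreconnected s) {g P Q : ℂ → ℂ}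
    (hP : ∀ z ∈ s, HasDerivAt P (g z) z) (hQ : ∀ z ∈ s, HasDerivAt Q (g z) z)
    {x y : ℂ} (hx : x ∈ s) (hy : y ∈ s) : P x - Q x = P y - Q y := by
  have hd : ∀ z ∈ s, HasDerivAt (fun z => P z - Q z) 0 z := fun z hz => by
    simpa using (hP z hz).fun_sub (hQ z hz)
  exact hs.is_const_of_deriv_eq_zero (f := fun z => P z - Q z) hs'
    (fun z hz => (hd z hz).differentiableAt.differentiableWithinAt)
    (fun z hz => (hd z hz).deriv) hx hy

/-- The bundle of local primitives. -/
noncomputable def primitiveCore {D : Set ℂ} (g : ℂ → ℂ) (r : D → ℝ) (hr : ∀ x, 0 < r x)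
    (P : D → ℂ → ℂ)
    (hP : ∀ x : D, ∀ z ∈ Metric.ball (x : ℂ) (r x), HasDerivAt (P x) (g z) z) :
    FiberBundleCore D D DiscC where
  baseSet x := {z : D | (z : ℂ) ∈ Metric.ball (x : ℂ) (r x)}
  isOpen_baseSet x := Metric.isOpen_ball.preimage continuous_subtype_val
  indexAt x := x
  mem_baseSet_at x := Metric.mem_ball_self (hr x)
  coordChange i j z v := ⟨v.val + P i z - P j z⟩
  coordChange_self i z _ v := by simp
  continuousOn_coordChange i j := by
    rintro ⟨z₀, v₀⟩ ⟨⟨h1, h2⟩, -⟩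
    have hconst : ∀ z : D, (z : ℂ) ∈ Metric.ball (i : ℂ) (r i) ∩ Metric.ball (j : ℂ) (r j) →
        P i z - P j z = P i z₀ - P j z₀ := fun z hz =>
      primitive_sub_const (Metric.isOpen_ball.inter Metric.isOpen_ball)
        ((convex_ball _ _).inter (convex_ball _ _)).isPreconnected
        (fun w hw => hP i w hw.1) (fun w hw => hP j w hw.2) hz ⟨h1, h2⟩
    have hc : Continuous fun p : D × DiscC => (⟨p.2.val + (P i z₀ - P j z₀)⟩ : DiscC) :=
      (continuous_of_discreteTopology
        (f := fun v : DiscC => (⟨v.val + (P i z₀ - P j z₀)⟩ : DiscC))).comp continuous_snd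
    refine hc.continuousWithinAt.congr (fun p hp => ?_) ?_
    · have := hconst p.1 hp.1
      simp only [add_sub_assoc, this]
    · simp only [add_sub_assoc]
  coordChange_comp i j k z _ v := by
    congr 1; ring

/-- A holomorphic function on a simply connected open set has a primitive. -/
lemma exists_primitive {D : Set ℂ} (hD : IsOpen D) (hsc : SimplyConnectedSpace D)
    (a : ℂ) (ha : a ∈ D) {g : ℂ → ℂ} (hg : DifferentiableOn ℂ g D) :
    ∃ H : ℂ → ℂ, ∀ z ∈ D, HasDerivAt H (g z) z := by
  classical
  have hlp := hD.locallyPathConnectedSpace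
  have h1 : ∀ x : D, ∃ r : ℝ, 0 < r ∧ Metric.ball (x : ℂ) r ⊆ D := fun x =>
    Metric.isOpen_iff.1 hD x x.2
  choose r hr hsub using h1
  have h2 : ∀ x : D, ∃ P : ℂ → ℂ, ∀ z ∈ Metric.ball (x : ℂ) (r x), HasDerivAt P (g z) z :=
    fun x => (hg.mono (hsub x)).isExactOn_ball
  choose P hP using h2
  let Z := primitiveCore g r hr P hP
  have hcov : IsCoveringMap (Bundle.TotalSpace.proj : Bundle.TotalSpace DiscC Z.Fiber → D) :=
    FiberBundle.isCoveringMap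
  obtain ⟨s, ⟨-, hs⟩, -⟩ := hcov.existsUnique_continuousMap_lifts (ContinuousMap.id D) ⟨a, ha⟩
    (⟨⟨a, ha⟩, (⟨0⟩ : DiscC)⟩ : Bundle.TotalSpace DiscC Z.Fiber) rfl
  have hs1 : ∀ z : D, (s z).proj = z := fun z => congrFun hs z
  let c : D → ℂ := fun z => DiscC.val (s z).snd
  refine ⟨fun z => if hz : z ∈ D then P ⟨z, hz⟩ z + c ⟨z, hz⟩ else 0, fun z₀ hz₀ => ?_⟩
  let i : D := ⟨z₀, hz₀⟩
  have hct : ContinuousAt (fun z : D => (Z.localTriv i (s z)).2) i := by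
    refine continuous_snd.continuousAt.comp ?_
    refine ContinuousAt.comp (g := Z.localTriv i) (f := s) ?_ s.continuous.continuousAt
    apply (Z.localTriv i).continuousAt
    rw [Z.mem_localTriv_source, hs1, ← Z.baseSet_at]
    exact Metric.mem_ball_self (hr i)
  have hev := hct.eventually (IsOpen.mem_nhds (isOpen_discrete {(Z.localTriv i (s i)).2}) rfl)
  have hval : ∀ z : D, ((Z.localTriv i (s z)).2).val = c z + P z z - P i z := by
    intro z
    rw [Z.localTriv_apply]
    change c z + P (s z).proj (s z).proj - P i (s z).proj = _
    rw [hs1]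
  have hev2 : ∀ᶠ z : D in nhds i, c z + P z z - P i z = c i := by
    filter_upwards [hev] with z hz
    have hz' : (Z.localTriv i (s z)).2 = (Z.localTriv i (s i)).2 := hz
    rw [← hval, hz', hval]; ring
  have hev3 : ∀ᶠ z : ℂ in nhds z₀, (if hz : z ∈ D then P ⟨z, hz⟩ z + c ⟨z, hz⟩ else 0)
      = P i z + c i := by
    have := (eventually_nhds_subtype_iff D i
      (fun z => (if hz : z ∈ D then P ⟨z, hz⟩ z + c ⟨z, hz⟩ else 0) = P i z + c i)).1 (by
        filter_upwards [hev2] with z hz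
        simp only [z.2, dite_true, ← hz, Subtype.coe_eta]; ring)
    rwa [hD.nhdsWithin_eq hz₀] at this
  exact ((hP i z₀ (Metric.mem_ball_self (hr i))).add_const (c i)).congr_of_eventuallyEq hev3

/-- The frozen notion of harmonicity implies Mathlib's. -/
lemma HarmonicOnR.nhd {h : ℂ → ℝ} {D : Set ℂ} (hD : IsOpen D) (hh : HarmonicOnR h D) :
    InnerProductSpace.HarmonicOnNhd h D := by
  intro x hx
  refine ⟨hh.1.contDiffAt (hD.mem_nhds hx), ?_⟩
  filter_upwards [hD.mem_nhds hx] with z hz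
  rw [InnerProductSpace.laplacian_eq_iteratedFDeriv_complexPlane]
  exact hh.2 z hz

/-- A harmonic function on a simply connected domain is the real part of a holomorphic one,
with prescribed (compatible) value at a point. -/
lemma exists_holomorphic_re {D : Set ℂ} (hD : IsOpen D) (hconn : IsConnected D)
    (hsc : SimplyConnectedSpace D) {a : ℂ} (ha : a ∈ D) {h : ℂ → ℝ}
    (hh : InnerProductSpace.HarmonicOnNhd h D) :
    ∃ H : ℂ → ℂ, DifferentiableOn ℂ H D ∧ H a = h a ∧ ∀ z ∈ D, (H z).re = h z := by
  obtain ⟨H₀, hH₀⟩ := exists_primitive hD hsc a ha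
    (g := fun z ↦ fderiv ℝ h z 1 - I * fderiv ℝ h z I)
    (fun z hz => (HarmonicAt.differentiableAt_complex_partial (hh z hz)).differentiableWithinAt)
  let H : ℂ → ℂ := fun z => H₀ z - H₀ a + h a
  have hH : ∀ z ∈ D, HasDerivAt H (fderiv ℝ h z 1 - I * fderiv ℝ h z I) z := fun z hz =>
    ((hH₀ z hz).sub_const _).add_const _
  have hre : ∀ z ∈ D, HasFDerivAt (fun z => (H z).re) (fderiv ℝ h z) z := by
    intro z hz
    have h1 := Complex.reCLM.hasFDerivAt.comp z ((hH z hz).hasFDerivAt.restrictScalars ℝ)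
    refine h1.congr_fderiv ?_
    ext w
    nth_rw 2 [(by simp : w = w.re • (1 : ℂ) + w.im • (I : ℂ))]
    rw [map_add, map_smul, map_smul]
    simp
  have hha : ∀ z ∈ D, DifferentiableAt ℝ h z := fun z hz =>
    (hh z hz).1.differentiableAt two_ne_zero
  refine ⟨H, fun z hz => (hH z hz).differentiableAt.differentiableWithinAt, by simp [H], ?_⟩
  exact hD.eqOn_of_fderiv_eq (𝕜 := ℝ) hconn.isPreconnected
    (fun z hz => (hre z hz).differentiableAt.differentiableWithinAt)
    (fun z hz => (hha z hz).differentiableWithinAt)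
    (fun z hz => (hre z hz).fderiv) ha (by simp [H])

/-- If `u` and `z * u` are both harmonic, then `u` is holomorphic. -/
lemma holomorphic_of_mul {D : Set ℂ} (hD : IsOpen D) {u v : ℂ → ℂ}
    (hu : HarmonicOnC u D) (hv : HarmonicOnC v D) (huv : ∀ z ∈ D, v z = z * u z) :
    DifferentiableOn ℂ u D := by
  have hp := hu.1.nhd hD
  have hq := hu.2.nhd hD
  have hV := hv.1.nhd hD
  have hW := hv.2.nhd hD
  let g : (ℂ → ℝ) → ℂ → ℂ := fun h z => fderiv ℝ h z 1 - I * fderiv ℝ h z I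
  have hg : ∀ h : ℂ → ℝ, InnerProductSpace.HarmonicOnNhd h D → DifferentiableOn ℂ (g h) D :=
    fun h hh z hz =>
      (HarmonicAt.differentiableAt_complex_partial (hh z hz)).differentiableWithinAt
  have key : ∀ z ∈ D, u z = ((g (fun z => (v z).re) z + I * g (fun z => (v z).im) z)
      - z * (g (fun z => (u z).re) z + I * g (fun z => (u z).im) z)) / 2 := by
    intro z hz
    have dp := ((hp z hz).1.differentiableAt two_ne_zero).hasFDerivAt
    have dq := ((hq z hz).1.differentiableAt two_ne_zero).hasFDerivAt
    have dx := Complex.reCLM.hasFDerivAt (x := z)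
    have dy := Complex.imCLM.hasFDerivAt (x := z)
    have e1 : (fun z => (v z).re) =ᶠ[nhds z]
        fun z => Complex.reCLM z * (u z).re - Complex.imCLM z * (u z).im := by
      filter_upwards [hD.mem_nhds hz] with w hw
      simp [huv w hw]
    have e2 : (fun z => (v z).im) =ᶠ[nhds z]
        fun z => Complex.reCLM z * (u z).im + Complex.imCLM z * (u z).re := by
      filter_upwards [hD.mem_nhds hz] with w hw
      simp [huv w hw]
    have d1 := (((dx.mul dp).sub (dy.mul dq)).congr_of_eventuallyEq e1).fderiv
    have d2 := (((dx.mul dq).add (dy.mul dp)).congr_of_eventuallyEq e2).fderiv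
    simp only [g]
    rw [d1, d2]
    apply Complex.ext <;> simp <;> ring
  refine DifferentiableOn.congr ?_ key
  have := hg _ hp
  have := hg _ hq
  have := hg _ hV
  have := hg _ hW
  fun_prop

/-- Simply connected case: if `f`, continuous on the boundary of a bounded simply connected
Dirichlet domain `D`, does not extend holomorphically through `D`, and `u`, `v` are the
harmonic extensions of `f` and `z·f`, then there are `a ∈ D`, `γ ∈ ℝ`, `α > 0` and
holomorphic `F, G` on `D` with
`Re(e^{iγ}(v(z) - a·u(z)) - (z-a)F(z) - (z-a)G(z)) = α` on `D`. -/
theorem simply_connected_correction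
    (D : Set ℂ) (hD_open : IsOpen D) (hD_conn : IsConnected D)
    (hD_bdd : Bornology.IsBounded D)
    (hD_sc : SimplyConnectedSpace D)
    (hDirichlet : ∀ φ : ℂ → ℝ, ContinuousOn φ (frontier D) →
      ∃ w : ℂ → ℝ, ContinuousOn w (closure D) ∧ HarmonicOnR w D ∧
        ∀ z ∈ frontier D, w z = φ z)
    (f : ℂ → ℂ) (hf : ContinuousOn f (frontier D))
    (u v : ℂ → ℂ)
    (hu_cont : ContinuousOn u (closure D)) (hu_harm : HarmonicOnC u D)
    (hu_bd : ∀ z ∈ frontier D, u z = f z)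
    (hv_cont : ContinuousOn v (closure D)) (hv_harm : HarmonicOnC v D)
    (hv_bd : ∀ z ∈ frontier D, v z = z * f z)
    (hnoext : ¬ ∃ g : ℂ → ℂ, ContinuousOn g (closure D) ∧ DifferentiableOn ℂ g D ∧
      ∀ z ∈ frontier D, g z = f z) :
    ∃ a ∈ D, ∃ γ : ℝ, ∃ α : ℝ, 0 < α ∧ ∃ F G : ℂ → ℂ,
      DifferentiableOn ℂ F D ∧ DifferentiableOn ℂ G D ∧
      ∀ z ∈ D,
        (Complex.exp (γ * Complex.I) * (v z - a * u z)
          - (z - a) * F z - (z - a) * G z).re = α := by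
  obtain ⟨a, ha, hne⟩ : ∃ a ∈ D, v a - a * u a ≠ 0 := by
    by_contra! hcon
    exact hnoext ⟨u, hu_cont, holomorphic_of_mul hD_open hu_harm hv_harm
      (fun z hz => sub_eq_zero.1 (hcon z hz)), hu_bd⟩
  set w : ℂ := v a - a * u a with hw
  let γ : ℝ := -w.arg
  let e : ℂ := Complex.exp (γ * Complex.I)
  have hew : e * w = (‖w‖ : ℂ) := by
    have h1 := Complex.norm_mul_exp_arg_mul_I w
    calc e * w = Complex.exp (γ * Complex.I) * (‖w‖ * Complex.exp (w.arg * Complex.I)) := by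
          rw [h1]
      _ = ‖w‖ * (Complex.exp (γ * Complex.I) * Complex.exp (w.arg * Complex.I)) := by ring
      _ = ‖w‖ := by rw [← Complex.exp_add]; simp [γ]
  let h : ℂ → ℝ := fun z => (e * (v z - a * u z)).re
  have hh : InnerProductSpace.HarmonicOnNhd h D := by
    have hp := hu_harm.1.nhd hD_open
    have hq := hu_harm.2.nhd hD_open
    have hV := hv_harm.1.nhd hD_open
    have hW := hv_harm.2.nhd hD_open
    have := ((hV.const_smul (c := e.re)).add (hW.const_smul (c := -e.im))).add
      ((hp.const_smul (c := -(e * a).re)).add (hq.const_smul (c := (e * a).im)))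
    convert this using 1
    funext z
    simp [h]
    ring
  obtain ⟨H, hHd, hHa, hHre⟩ := exists_holomorphic_re hD_open hD_conn hD_sc ha hh
  refine ⟨a, ha, γ, ‖w‖, norm_pos_iff.2 hne, dslope H a, 0,
    (Complex.differentiableOn_dslope (hD_open.mem_nhds ha)).2 hHd,
    differentiableOn_const 0, fun z hz => ?_⟩
  have h1 : (z - a) * dslope H a z = H z - H a := by
    simpa using sub_smul_dslope H a z
  have h2 : h a = ‖w‖ := by
    simp only [h, ← hw, hew, Complex.ofReal_re]
  rw [h1, hHa, h2]
  have h3 := hHre z hz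
  change (e * (v z - a * u z) - _ - _).re = _
  simp only [Complex.sub_re, h3, Complex.ofReal_re, Pi.zero_apply, mul_zero, Complex.zero_re]
  simp only [h, Complex.sub_re]
  ring
end

section
/- Let D ⊆ ℂ be a bounded domain, let f : ∂D → ℂ be continuous, and let u, v : cl(D) → ℂ be continuous on cl(D), harmonic on D, with u(z) = f(z) and v(z) = z·f(z) for z ∈ ∂D. If u is not holomorphic on D, then the set { a ∈ D : v(a) − a·u(a) = 0 } is a closed, nowhere dense subset of D. -/
open Complex Set

open InnerProductSpace Topology in
lemma HarmonicOnR.harmonicAt' {u : ℂ → ℝ} {D : Set ℂ} (hD : IsOpen D) (h : HarmonicOnR u D)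
    {z : ℂ} (hz : z ∈ D) : HarmonicAt u z := by
  refine ⟨h.1.contDiffAt (hD.mem_nhds hz), ?_⟩
  filter_upwards [hD.mem_nhds hz] with y hy
  rw [laplacian_eq_iteratedFDeriv_complexPlane]
  exact h.2 y hy

open InnerProductSpace Topology in
lemma HarmonicOnC.harmonicAt' {u : ℂ → ℂ} {D : Set ℂ} (hD : IsOpen D) (h : HarmonicOnC u D)
    {z : ℂ} (hz : z ∈ D) : HarmonicAt u z := by
  have h1 := (h.1.harmonicAt' hD hz).comp_CLM ofRealCLM
  have h2 := (h.2.harmonicAt' hD hz).comp_CLM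
    (ContinuousLinearMap.toSpanSingleton ℝ Complex.I)
  convert h1.add h2 using 1
  funext y
  simp

lemma HarmonicOnC.analyticAt' {u : ℂ → ℂ} {D : Set ℂ} (hD : IsOpen D) (h : HarmonicOnC u D)
    {z : ℂ} (hz : z ∈ D) : AnalyticAt ℝ u z := by
  have h1 := (ofRealCLM.analyticAt _).comp (HarmonicAt.analyticAt (h.1.harmonicAt' hD hz))
  have h2 := ((ContinuousLinearMap.toSpanSingleton ℝ Complex.I).analyticAt _).comp
    (HarmonicAt.analyticAt (h.2.harmonicAt' hD hz))
  convert h1.add h2 using 1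
  funext y
  simp

open InnerProductSpace Topology in
lemma differentiableAt_of_harmonic_mul {u v : ℂ → ℂ} {z : ℂ} (hu : HarmonicAt u z)
    (hv : HarmonicAt v z) (h : v =ᶠ[𝓝 z] fun y => y * u y) : DifferentiableAt ℂ u z := by
  have hd : DifferentiableAt ℝ u z := hu.1.differentiableAt (by norm_num)
  have hdd : DifferentiableAt ℝ (fderiv ℝ u) z :=
    (hu.1.fderiv_right (m := 1) (by norm_num)).differentiableAt (by norm_num)
  have e1 : ∀ᶠ y in 𝓝 z, DifferentiableAt ℝ u y := by
    filter_upwards [hu.1.eventually (by simp)] with y hy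
    exact hy.differentiableAt (by norm_num)
  have e2 : fderiv ℝ v =ᶠ[𝓝 z]
      fun y => y • fderiv ℝ u y + u y • (ContinuousLinearMap.id ℝ ℂ) := by
    refine h.fderiv.trans ?_
    filter_upwards [e1] with y hy
    have := ((hasFDerivAt_id (𝕜 := ℝ) y).mul hy.hasFDerivAt).fderiv
    exact this
  have e3 := Filter.EventuallyEq.fderiv_eq (𝕜 := ℝ) e2
  have e4 := ((HasFDerivAt.smul (hasFDerivAt_id (𝕜 := ℝ) z : HasFDerivAt (fun y : ℂ => y) _ z) hdd.hasFDerivAt).add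
    (hd.hasFDerivAt.smul_const (ContinuousLinearMap.id ℝ ℂ))).fderiv
  have e5 := e3.trans e4
  have lu := hu.2.self_of_nhds
  have lv := hv.2.self_of_nhds
  rw [laplacian_eq_iteratedFDeriv_complexPlane] at lu lv
  simp only [iteratedFDeriv_two_apply, e5] at lu lv
  simp at lu lv
  rw [differentiableAt_complex_iff_differentiableAt_real]
  refine ⟨hd, ?_⟩
  have : 2 * (fderiv ℝ u z 1 + I * fderiv ℝ u z I) = 0 := by
    linear_combination lv - z * lu
  rw [smul_eq_mul]
  have : fderiv ℝ u z 1 + I * fderiv ℝ u z I = 0 := by simpa using this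
  linear_combination (-I) * this + fderiv ℝ u z I * I_mul_I

/-- If `u`, `v` are the harmonic extensions of `f` and `z·f` to a bounded domain `D` and
`u` is not holomorphic on `D`, then `{a ∈ D : v(a) - a·u(a) = 0}` is a closed, nowhere
dense subset of `D` (with its subspace topology). -/
theorem zero_set_closed_nowhere_dense
    (D : Set ℂ) (hD_open : IsOpen D) (hD_conn : IsConnected D)
    (hD_bdd : Bornology.IsBounded D)
    (f : ℂ → ℂ) (hf : ContinuousOn f (frontier D))
    (u v : ℂ → ℂ)
    (hu_cont : ContinuousOn u (closure D)) (hu_harm : HarmonicOnC u D)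
    (hu_bd : ∀ z ∈ frontier D, u z = f z)
    (hv_cont : ContinuousOn v (closure D)) (hv_harm : HarmonicOnC v D)
    (hv_bd : ∀ z ∈ frontier D, v z = z * f z)
    (hu_nothol : ¬ DifferentiableOn ℂ u D) :
    IsClosed {a : D | v a - (a : ℂ) * u a = 0} ∧
      IsNowhereDense {a : D | v a - (a : ℂ) * u a = 0} := by
  have hcont : Continuous fun a : D => v a - (a : ℂ) * u a := by
    have h1 := (hu_cont.mono subset_closure).domRestrict
    have h2 := (hv_cont.mono subset_closure).domRestrict
    exact h2.sub (continuous_subtype_val.mul h1)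
  have hcl : IsClosed {a : D | v a - (a : ℂ) * u a = 0} :=
    isClosed_eq hcont continuous_const
  refine ⟨hcl, ?_⟩
  rw [hcl.isNowhereDense_iff]
  by_contra hne
  obtain ⟨a, ha⟩ := Set.nonempty_iff_ne_empty.2 hne
  apply hu_nothol
  have han : AnalyticOnNhd ℝ (fun z => v z - z * u z) D := fun z hz =>
    (hv_harm.analyticAt' hD_open hz).sub (analyticAt_id.mul (hu_harm.analyticAt' hD_open hz))
  have hev : (fun z => v z - z * u z) =ᶠ[nhds (a : ℂ)] 0 := by
    have := mem_interior_iff_mem_nhds.1 ha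
    rw [← map_nhds_subtype_coe_eq_nhds a.2 (hD_open.mem_nhds a.2)]
    exact this
  have hz := han.eqOn_zero_of_preconnected_of_eventuallyEq_zero hD_conn.isPreconnected a.2 hev
  intro z hzD
  refine (differentiableAt_of_harmonic_mul (hu_harm.harmonicAt' hD_open hzD)
    (hv_harm.harmonicAt' hD_open hzD) ?_).differentiableWithinAt
  filter_upwards [hD_open.mem_nhds hzD] with y hy
  exact sub_eq_zero.1 (hz hy)
end

section
/- Let Δ be the open unit disc in ℂ. If g : cl(Δ) → ℂ is continuous on the closed unit disc and holomorphic (complex differentiable) at every point of Δ ∖ [0, 1), then g is holomorphic on all of Δ. (Here [0,1) = { x ∈ ℝ : 0 ≤ x < 1 } viewed as a subset of ℂ.) -/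
open Complex Set Metric
open scoped Interval

lemma slit_rect_aux (g : ℂ → ℂ) (hc : ContinuousOn g (ball (0 : ℂ) 1))
    (hd : ∀ z ∈ ball (0 : ℂ) 1, z.im ≠ 0 → DifferentiableAt ℂ g z) (a b c d : ℝ)
    (hR : [[a, b]] ×ℂ [[c, d]] ⊆ ball (0 : ℂ) 1)
    (h0 : (0 : ℝ) ∉ Ioo (min c d) (max c d)) :
    (∫ x : ℝ in a..b, g (x + c * I)) - (∫ x : ℝ in a..b, g (x + d * I)) +
      I • (∫ y : ℝ in c..d, g (b + y * I)) -
      I • (∫ y : ℝ in c..d, g (a + y * I)) = 0 := by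
  have h := integral_boundary_rect_eq_zero_of_continuousOn_of_differentiableOn g ⟨a, c⟩ ⟨b, d⟩
    (hc.mono hR) (by
      intro z hz
      refine (hd z (hR ?_) ?_).differentiableWithinAt
      · exact ⟨Ioo_subset_Icc_self hz.1, Ioo_subset_Icc_self hz.2⟩
      · intro h
        apply h0
        have := hz.2
        rw [mem_preimage, h] at this
        exact this)
  exact h

lemma slit_vert_aux (g : ℂ → ℂ) (hc : ContinuousOn g (ball (0 : ℂ) 1)) (a c d : ℝ)
    (h : ∀ y ∈ [[c, d]], (a + y * I : ℂ) ∈ ball (0 : ℂ) 1) :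
    IntervalIntegrable (fun y : ℝ => g (a + y * I)) MeasureTheory.volume c d := by
  apply ContinuousOn.intervalIntegrable
  exact hc.comp (by fun_prop) h

/-- If `g` is continuous on the closed unit disc and complex differentiable at every point
of `Δ \ [0,1)`, then `g` is holomorphic on all of `Δ`. -/
theorem holomorphic_extension_across_slit
    (g : ℂ → ℂ)
    (hg_cont : ContinuousOn g (closure (ball (0 : ℂ) 1)))
    (hg_diff : ∀ z ∈ ball (0 : ℂ) 1 \ (Complex.ofReal '' Set.Ico (0 : ℝ) 1),
      DifferentiableAt ℂ g z) :
    DifferentiableOn ℂ g (ball (0 : ℂ) 1) := by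
  have hc : ContinuousOn g (ball (0 : ℂ) 1) := hg_cont.mono subset_closure
  have hd : ∀ z ∈ ball (0 : ℂ) 1, z.im ≠ 0 → DifferentiableAt ℂ g z := by
    intro z hz hi
    refine hg_diff z ⟨hz, ?_⟩
    rintro ⟨x, -, rfl⟩
    exact hi (ofReal_im x)
  refine (isConservativeOn_and_continuousOn_iff_isDifferentiableOn isOpen_ball).mp ⟨?_, hc⟩
  intro z w hzw
  rw [← add_eq_zero_iff_eq_neg, wedgeIntegral_add_wedgeIntegral_eq]
  by_cases h0 : (0 : ℝ) ∈ Ioo (min z.im w.im) (max z.im w.im)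
  · have hm : (0 : ℝ) ∈ [[z.im, w.im]] := Ioo_subset_Icc_self h0
    have s1 : [[z.im, 0]] ⊆ [[z.im, w.im]] := uIcc_subset_uIcc left_mem_uIcc hm
    have s2 : [[0, w.im]] ⊆ [[z.im, w.im]] := uIcc_subset_uIcc hm right_mem_uIcc
    have e1 := slit_rect_aux g hc hd z.re w.re z.im 0
      (fun p hp => hzw ⟨hp.1, s1 hp.2⟩) (by
        rintro ⟨h1, h2⟩
        rcases le_total z.im 0 with h | h <;> simp_all)
    have e2 := slit_rect_aux g hc hd z.re w.re 0 w.im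
      (fun p hp => hzw ⟨hp.1, s2 hp.2⟩) (by
        rintro ⟨h1, h2⟩
        rcases le_total w.im 0 with h | h <;> simp_all)
    have hv : ∀ a ∈ [[z.re, w.re]], ∀ y ∈ [[z.im, w.im]], (a + y * I : ℂ) ∈ ball (0 : ℂ) 1 := by
      intro a ha y hy
      apply hzw
      refine ⟨?_, ?_⟩ <;> simpa
    have v : ∀ a ∈ [[z.re, w.re]], (∫ y : ℝ in z.im..w.im, g (a + y * I)) =
        (∫ y : ℝ in z.im..0, g (a + y * I)) + ∫ y : ℝ in 0..w.im, g (a + y * I) := by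
      intro a ha
      exact (intervalIntegral.integral_add_adjacent_intervals
        (slit_vert_aux g hc a _ _ fun y hy => hv a ha y (s1 hy))
        (slit_vert_aux g hc a _ _ fun y hy => hv a ha y (s2 hy))).symm
    rw [v _ left_mem_uIcc, v _ right_mem_uIcc]
    simp only [smul_eq_mul] at *
    linear_combination e1 + e2
  · exact slit_rect_aux g hc hd _ _ _ _ hzw h0
end
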